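/- Let conditions A, B and H hold, with v_ε = p_ε^{−1}. Then: (i) f_ε^{−1} ν_ε(1) converges in distribution as ε → 0 to a random variable ν₀ exponentially distributed with parameter 1; (ii) condition I: f_ε → f₀ ∈ [0, ∞] as ε → 0 is necessary and sufficient for the convergence in distribution (with possibly improper limit) of ν_ε(1) (for some family of initial distributions in the necessity statement, for any family in the sufficiency statement), and in that case the limit is distributed as f₀ν₀; (iii) if f₀ = ∞ then ν_ε(t) → ∞ in probability as ε → 0, for every t > 0. -/

import Mathlib

open MeasureTheory Filter Set
open scoped Topology ENNReal

noncomputable section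

/-- Condition B: there exists a ring chain of states `c 0, c 1, …, c N = c 0`
containing all states of the phase space, with
`liminf_{ε→0+} p ε (c (k-1)) (c k) > 0` for `k = 1, …, N`. -/
def CondB {m : ℕ} (p : ℝ → Fin m → Fin m → ℝ) : Prop :=
  ∃ N : ℕ, 0 < N ∧ ∃ c : ℕ → Fin m, c N = c 0 ∧
    (∀ i : Fin m, ∃ k ≤ N, c k = i) ∧
    ∀ k < N, 0 < Filter.liminf (fun ε => p ε (c k) (c (k + 1))) (𝓝[>] (0 : ℝ))

/-- `π` is a stationary distribution of the transition matrix `p`. -/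
def IsStationaryDist {m : ℕ} (p : Fin m → Fin m → ℝ) (π : Fin m → ℝ) : Prop :=
  (∀ i, 0 ≤ π i) ∧ (∑ i, π i = 1) ∧ ∀ j, π j = ∑ i, π i * p i j

/-- `p_{ε,i} = P_i(ζ_{ε,1} = 1)`, the probability of occurrence of the rare event during
one transition step, starting from state `i`. -/
def rareP {m : ℕ} {Ω : Type} [MeasurableSpace Ω]
    (Pstart : ℝ → Fin m → Measure Ω) (ζ : ℝ → ℕ → Ω → Bool) (ε : ℝ) (i : Fin m) : ℝ :=
  (Pstart ε i {ω | ζ ε 1 ω = true}).toReal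

/-- `p_ε = Σ_i π_{ε,i} p_{ε,i}`, the stationary average of the rare-event probabilities. -/
def avgRare {m : ℕ} {Ω : Type} [MeasurableSpace Ω]
    (Pstart : ℝ → Fin m → Measure Ω) (ζ : ℝ → ℕ → Ω → Bool) (π : ℝ → Fin m → ℝ)
    (ε : ℝ) : ℝ :=
  ∑ i, π ε i * rareP Pstart ζ ε i

/-- `ν_ε = min{n ≥ 1 : ζ_{ε,n} = 1}`, the number of steps until the first rare event. -/
def nuRE {Ω : Type} (ζ : ℝ → ℕ → Ω → Bool) (ε : ℝ) (ω : Ω) : ℕ :=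
  sInf {n : ℕ | 1 ≤ n ∧ ζ ε n ω = true}

/-- The process `ν_ε(t) = Σ_{n=1}^{[t ν_ε]} f_{ε,η_{ε,n−1}}`. -/
def nuProc {m : ℕ} {Ω : Type} (η : ℝ → ℕ → Ω → Fin m) (ζ : ℝ → ℕ → Ω → Bool)
    (f : ℝ → Fin m → ℝ) (ε t : ℝ) (ω : Ω) : ℝ :=
  ∑ n ∈ Finset.Icc 1 (Nat.floor (t * (nuRE ζ ε ω : ℝ))), f ε (η ε (n - 1) ω)

/-- `f_ε = v_ε Σ_i π_{ε,i} f_{ε,i}` with `v_ε = p_ε⁻¹`. -/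
def fBarNu {m : ℕ} {Ω : Type} [MeasurableSpace Ω]
    (Pstart : ℝ → Fin m → Measure Ω) (ζ : ℝ → ℕ → Ω → Bool) (π : ℝ → Fin m → ℝ)
    (f : ℝ → Fin m → ℝ) (ε : ℝ) : ℝ :=
  (avgRare Pstart ζ π ε)⁻¹ * ∑ i, π ε i * f ε i


/-!
The probability that no event has occurred and every Laplace transform of an accumulated reward
solve an equation `x = θ + Q x` on the state space, `Q` being the embedded chain killed, and
possibly discounted, with small probability. Uniform irreducibility bounds the oscillation of `x`
by a multiple of the defect of `Q`, so `x` is nearly constant, and integrating the equation against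
the stationary distribution `π` identifies the constant. For the reward `u` up to the first event
it is `δ / (δ + τ)`, with `δ` the stationary probability of an event and `τ` the stationary mean of
`u`: the Laplace transform at `1` of an exponential variable of mean `τ / δ`. The error is
`O(√δ)`, uniformly in `u ≥ 0` and in the initial state, which is what allows arbitrary rewards and
initial distributions.
-/

lemma abs_div_add_sub_div_add_le {A B δ τ γ : ℝ} (hA : 0 ≤ A) (hB : 0 ≤ B) (hAB : 0 < A + B)
    (hδτ : 0 < δ + τ) (hγ : 0 ≤ γ) (hAδ : A ≤ δ) (hBτ : B ≤ τ) (hδA : (1 - γ) * δ ≤ A)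
    (hτB : (1 - γ) * τ ≤ B) : |A / (A + B) - δ / (δ + τ)| ≤ γ := by
  have hδ : 0 ≤ δ := hA.trans hAδ
  have hτ : 0 ≤ τ := hB.trans hBτ
  have hrest : 0 ≤ γ * (A * δ + B * τ) := by positivity
  rw [div_sub_div _ _ hAB.ne' hδτ.ne', abs_div, abs_of_pos (mul_pos hAB hδτ),
    div_le_iff₀ (mul_pos hAB hδτ), abs_le]
  constructor
  · have hBδ : (1 - γ) * δ * B ≤ A * τ := (mul_le_mul_of_nonneg_right hδA hB).trans
      (mul_le_mul_of_nonneg_left hBτ hA)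
    linarith [mul_nonneg hγ (mul_nonneg hA hτ)]
  · have hAτ : (1 - γ) * τ * A ≤ B * δ := (mul_le_mul_of_nonneg_right hτB hA).trans
      (mul_le_mul_of_nonneg_left hAδ hB)
    linarith [mul_nonneg hγ (mul_nonneg hB hδ)]

section UniformChain

open scoped Matrix

variable {X : Type*} [Fintype X]

lemma mulVec_le_mulVec {A B : Matrix X X ℝ} {x y : X → ℝ} (hAB : ∀ i j, A i j ≤ B i j)
    (hB : ∀ i j, 0 ≤ B i j) (hx : 0 ≤ x) (hxy : x ≤ y) : A *ᵥ x ≤ B *ᵥ y := fun i =>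
  Finset.sum_le_sum fun j _ => mul_le_mul (hAB i j) (hxy j) (hx j) (hB i j)

lemma mulVec_nonneg {A : Matrix X X ℝ} {x : X → ℝ} (hA : ∀ i j, 0 ≤ A i j) (hx : 0 ≤ x) :
    0 ≤ A *ᵥ x := fun i => Finset.sum_nonneg fun j _ => mul_nonneg (hA i j) (hx j)

variable [DecidableEq X]

lemma pow_mulVec_nonneg {A : Matrix X X ℝ} {x : X → ℝ} (hA : ∀ i j, 0 ≤ A i j) (hx : 0 ≤ x)
    (n : ℕ) : 0 ≤ A ^ n *ᵥ x := by
  induction n with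
  | zero => simpa using hx
  | succ n ih => simpa only [pow_succ', Matrix.mulVec_mulVec] using mulVec_nonneg hA ih

lemma sum_pow_mulVec_one_sub (A : Matrix X X ℝ) (n : ℕ) :
    ∑ k ∈ Finset.range n, A ^ k *ᵥ (1 - A *ᵥ 1) = 1 - A ^ n *ᵥ 1 := by
  simp only [Matrix.mulVec_sub, Matrix.mulVec_mulVec, ← pow_succ]
  rw [Finset.sum_range_sub' fun k => A ^ k *ᵥ 1, pow_zero, Matrix.one_mulVec]

lemma antitone_pow_mulVec_one {Q : Matrix X X ℝ} (hQ : ∀ i j, 0 ≤ Q i j) (hQ1 : Q *ᵥ 1 ≤ 1) :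
    Antitone fun n => Q ^ n *ᵥ (1 : X → ℝ) := antitone_nat_of_succ_le fun n => by
  rw [pow_succ, ← Matrix.mulVec_mulVec, ← sub_nonneg, ← Matrix.mulVec_sub]
  exact pow_mulVec_nonneg hQ (sub_nonneg.2 hQ1) n

lemma one_sub_pow_mulVec_one_le {Q : Matrix X X ℝ} (hQ : ∀ i j, 0 ≤ Q i j) (hQ1 : Q *ᵥ 1 ≤ 1)
    {b : ℝ} (hb : ∀ i, (1 - Q *ᵥ 1) i ≤ b) (n : ℕ) (i : X) : (1 - Q ^ n *ᵥ 1) i ≤ n * b := by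
  have hb0 : 0 ≤ b := (sub_nonneg.2 (hQ1 i)).trans (hb i)
  rw [← sum_pow_mulVec_one_sub, Finset.sum_apply, ← nsmul_eq_mul]
  refine (Finset.sum_le_card_nsmul _ _ b fun k _ => ?_).trans_eq (by rw [Finset.card_range])
  have hexit : (Q ^ k *ᵥ (1 - Q *ᵥ 1)) i ≤ (Q ^ k *ᵥ (b • 1)) i := by
    rw [← sub_nonneg, ← Pi.sub_apply, ← Matrix.mulVec_sub]
    exact pow_mulVec_nonneg hQ (fun j => by simpa using hb j) k i
  have hpow : (Q ^ k *ᵥ 1) i ≤ 1 := by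
    simpa using antitone_pow_mulVec_one hQ hQ1 k.zero_le i
  rw [Matrix.mulVec_smul, Pi.smul_apply, smul_eq_mul] at hexit
  exact hexit.trans (mul_le_of_le_one_right hb0 hpow)

lemma le_pow_mulVec_add {p : Matrix X X ℝ} (hp : p ∈ Matrix.rowStochastic ℝ X) {x : X → ℝ} {κ : ℝ}
    (hx : ∀ i, x i ≤ (p *ᵥ x) i + κ) (n : ℕ) (i : X) : x i ≤ (p ^ n *ᵥ x) i + n * κ := by
  induction n generalizing i with
  | zero => simp
  | succ n ih =>
    have hmono : (p *ᵥ x) i ≤ (p *ᵥ (p ^ n *ᵥ x + fun _ => n * κ)) i :=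
      Finset.sum_le_sum fun j _ =>
        mul_le_mul_of_nonneg_left (ih j) (Matrix.nonneg_of_mem_rowStochastic hp)
    have hconst : (p *ᵥ fun _ => n * κ) i = n * κ := by
      simp only [Matrix.mulVec, dotProduct, ← Finset.sum_mul,
        Matrix.sum_row_of_mem_rowStochastic hp, one_mul]
    rw [Matrix.mulVec_add, Matrix.mulVec_mulVec, ← pow_succ', Pi.add_apply, hconst] at hmono
    push_cast
    linarith [hx i]

/-- `p` is a stochastic matrix with stationary distribution `π` in which every state reaches every
other one, in at most `L` steps and along powers of `p` whose entry is at least `a > 0`: a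
quantitative form of irreducibility, uniform over a family of chains sharing `L` and `a`. -/
structure IsUniformChain (p : Matrix X X ℝ) (π : X → ℝ) (L : ℕ) (a : ℝ) : Prop where
  mem_rowStochastic : p ∈ Matrix.rowStochastic ℝ X
  pos : 0 < a
  exists_le_pow : ∀ i j, ∃ n ≤ L, a ≤ (p ^ n) i j
  nonneg : 0 ≤ π
  sum_eq_one : ∑ i, π i = 1
  vecMul_eq : π ᵥ* p = π

/-- The probability, under the distribution `π`, that a step of the substochastic matrix `Q` leaves
the state space. -/
def exitRate (π : X → ℝ) (Q : Matrix X X ℝ) : ℝ :=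
  π ⬝ᵥ (1 - Q *ᵥ 1)

namespace IsUniformChain

variable {p Q : Matrix X X ℝ} {π x θ : X → ℝ} {L : ℕ} {a κ : ℝ}

lemma vecMul_pow_eq (h : IsUniformChain p π L a) (n : ℕ) : π ᵥ* p ^ n = π := by
  induction n with
  | zero => simp
  | succ n ih => rw [pow_succ, ← Matrix.vecMul_vecMul, ih, h.vecMul_eq]

lemma dotProduct_le_one (h : IsUniformChain p π L a) (hθ : θ ≤ 1) : π ⬝ᵥ θ ≤ 1 := calc
  π ⬝ᵥ θ ≤ π ⬝ᵥ 1 := dotProduct_le_dotProduct_of_nonneg_left hθ h.nonneg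
  _ = 1 := by rw [dotProduct_one, h.sum_eq_one]

lemma mulVec_one_le_one (h : IsUniformChain p π L a) (hQp : ∀ i j, Q i j ≤ p i j) :
    Q *ᵥ 1 ≤ 1 := calc
  Q *ᵥ 1 ≤ p *ᵥ 1 := mulVec_le_mulVec hQp
    (fun _ _ => Matrix.nonneg_of_mem_rowStochastic h.mem_rowStochastic) zero_le_one le_rfl
  _ = 1 := Matrix.one_vecMul_of_mem_rowStochastic h.mem_rowStochastic

lemma div_card_le (h : IsUniformChain p π L a) (i : X) : a / Fintype.card X ≤ π i := by
  have hcard : (0 : ℝ) < Fintype.card X := Nat.cast_pos.2 (Fintype.card_pos_iff.2 ⟨i⟩)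
  obtain ⟨k, -, hk⟩ : ∃ k ∈ Finset.univ, (Fintype.card X : ℝ)⁻¹ ≤ π k :=
    Finset.exists_le_of_sum_le ⟨i, Finset.mem_univ i⟩ (by
      simp [h.sum_eq_one, hcard.ne'])
  obtain ⟨n, -, hn⟩ := h.exists_le_pow k i
  have hpow := pow_mem h.mem_rowStochastic n
  calc a / Fintype.card X = (Fintype.card X : ℝ)⁻¹ * a := by rw [div_eq_inv_mul]
    _ ≤ π k * (p ^ n) k i := mul_le_mul hk hn h.pos.le (h.nonneg k)
    _ ≤ (π ᵥ* p ^ n) i := Finset.single_le_sum (f := fun k => π k * (p ^ n) k i)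
        (fun j _ => mul_nonneg (h.nonneg j) (Matrix.nonneg_of_mem_rowStochastic hpow))
        (Finset.mem_univ k)
    _ = π i := by rw [h.vecMul_pow_eq]

lemma apply_le_mul_dotProduct (h : IsUniformChain p π L a) (hθ : 0 ≤ θ) (i : X) :
    θ i ≤ Fintype.card X / a * π ⬝ᵥ θ := by
  have hcard : (0 : ℝ) < Fintype.card X := Nat.cast_pos.2 (Fintype.card_pos_iff.2 ⟨i⟩)
  have hb : 0 < a / Fintype.card X := div_pos h.pos hcard
  rw [← inv_div, inv_mul_eq_div, le_div_iff₀' hb]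
  calc a / Fintype.card X * θ i ≤ π i * θ i := mul_le_mul_of_nonneg_right (h.div_card_le i) (hθ i)
    _ ≤ π ⬝ᵥ θ := Finset.single_le_sum (f := fun j => π j * θ j)
        (fun j _ => mul_nonneg (h.nonneg j) (hθ j)) (Finset.mem_univ i)

lemma le_add_of_le_mulVec (h : IsUniformChain p π L a) (hκ : 0 ≤ κ)
    (hx : ∀ i, x i ≤ (p *ᵥ x) i + κ) (i j : X) : x i ≤ x j + L / a * κ := by
  have : Nonempty X := ⟨i⟩
  obtain ⟨i₀, hi₀⟩ := Finite.exists_max x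
  obtain ⟨n, hnL, hn⟩ := h.exists_le_pow i₀ j
  have hpow := pow_mem h.mem_rowStochastic n
  have hgap : a * (x i₀ - x j) ≤ L * κ := calc
    a * (x i₀ - x j) ≤ (p ^ n) i₀ j * (x i₀ - x j) :=
        mul_le_mul_of_nonneg_right hn (sub_nonneg.2 (hi₀ j))
    _ ≤ ∑ k, (p ^ n) i₀ k * (x i₀ - x k) :=
        Finset.single_le_sum (f := fun k => (p ^ n) i₀ k * (x i₀ - x k)) (fun k _ =>
          mul_nonneg (Matrix.nonneg_of_mem_rowStochastic hpow) (sub_nonneg.2 (hi₀ k)))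
          (Finset.mem_univ j)
    _ = x i₀ - (p ^ n *ᵥ x) i₀ := by
        simp only [mul_sub, Finset.sum_sub_distrib, ← Finset.sum_mul,
          Matrix.sum_row_of_mem_rowStochastic hpow, one_mul, Matrix.mulVec, dotProduct]
    _ ≤ n * κ := by linarith [le_pow_mulVec_add h.mem_rowStochastic hx n i₀]
    _ ≤ L * κ := by gcongr
  have : x i₀ - x j ≤ L / a * κ := by
    rw [div_mul_eq_mul_div, le_div_iff₀ h.pos]
    linarith
  linarith [hi₀ i]

/- The oscillation of a subsolution `x` is at most `L / a * κ`, so it suffices to bound its minimum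
`y`; integrating the inequality against `π` gives `y * exitRate π Q ≤ π ⬝ᵥ θ`. -/
lemma le_of_le_add_mulVec (h : IsUniformChain p π L a) (hQp : ∀ i j, Q i j ≤ p i j) (hx : 0 ≤ x)
    (hκ : 0 ≤ κ) (hθ : ∀ i, θ i ≤ κ) (hsub : x ≤ θ + Q *ᵥ x) (hD : 0 < exitRate π Q) (i : X) :
    x i ≤ π ⬝ᵥ θ / exitRate π Q + L / a * κ := by
  set y : ℝ := x i - L / a * κ
  have hp : ∀ i j, 0 ≤ p i j := fun _ _ => Matrix.nonneg_of_mem_rowStochastic h.mem_rowStochastic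
  have hy : ∀ j, y ≤ x j := fun j => by
    have := h.le_add_of_le_mulVec hκ (x := x) (fun k => by
      linarith [hsub k, hθ k, mulVec_le_mulVec hQp hp hx le_rfl k, Pi.add_apply θ (Q *ᵥ x) k]) i j
    linarith
  have hQ : π ⬝ᵥ ((p - Q) *ᵥ x) ≤ π ⬝ᵥ θ := by
    have := dotProduct_le_dotProduct_of_nonneg_left hsub h.nonneg
    rw [dotProduct_add] at this
    rw [Matrix.sub_mulVec, dotProduct_sub, Matrix.dotProduct_mulVec π p, h.vecMul_eq]
    linarith
  have hyD : y * exitRate π Q = π ⬝ᵥ ((p - Q) *ᵥ (y • 1)) := by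
    rw [exitRate, Matrix.mulVec_smul, dotProduct_smul, Matrix.sub_mulVec,
      Matrix.one_vecMul_of_mem_rowStochastic h.mem_rowStochastic, smul_eq_mul]
  have hyx : π ⬝ᵥ ((p - Q) *ᵥ (y • 1)) ≤ π ⬝ᵥ ((p - Q) *ᵥ x) :=
    dotProduct_le_dotProduct_of_nonneg_left (fun i => Finset.sum_le_sum fun j _ =>
      mul_le_mul_of_nonneg_left (by simpa using hy j) (sub_nonneg.2 (hQp i j))) h.nonneg
  have : y ≤ π ⬝ᵥ θ / exitRate π Q := by
    rw [le_div_iff₀ hD]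
    linarith
  linarith

lemma sum_pow_mulVec_le (h : IsUniformChain p π L a) (hQ : ∀ i j, 0 ≤ Q i j)
    (hQp : ∀ i j, Q i j ≤ p i j) (hθ : 0 ≤ θ) (hθκ : ∀ i, θ i ≤ κ) (hD : 0 < exitRate π Q)
    (n : ℕ) (i : X) :
    (∑ k ∈ Finset.range n, Q ^ k *ᵥ θ) i ≤ π ⬝ᵥ θ / exitRate π Q + L / a * κ := by
  have hterm : ∀ k, 0 ≤ Q ^ k *ᵥ θ := pow_mulVec_nonneg hQ hθ
  have hsucc : ∑ k ∈ Finset.range (n + 1), Q ^ k *ᵥ θ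
      = θ + Q *ᵥ ∑ k ∈ Finset.range n, Q ^ k *ᵥ θ := by
    rw [Finset.sum_range_succ', Matrix.mulVec_sum, pow_zero, Matrix.one_mulVec, add_comm]
    simp only [Matrix.mulVec_mulVec, ← pow_succ']
  refine h.le_of_le_add_mulVec hQp (Finset.sum_nonneg fun k _ => hterm k)
    ((hθ i).trans (hθκ i)) hθκ ?_ hD i
  rw [← hsucc, Finset.sum_range_succ]
  exact le_add_of_nonneg_right (hterm n)

lemma mul_pow_mulVec_one_le (h : IsUniformChain p π L a) (hQ : ∀ i j, 0 ≤ Q i j)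
    (hQp : ∀ i j, Q i j ≤ p i j) (hD : 0 < exitRate π Q) (n : ℕ) (i : X) :
    n * (Q ^ n *ᵥ 1) i ≤ 1 / exitRate π Q + L / a := by
  have hanti := antitone_pow_mulVec_one hQ (h.mulVec_one_le_one hQp)
  calc n * (Q ^ n *ᵥ 1) i = ∑ _k ∈ Finset.range n, (Q ^ n *ᵥ 1) i := by simp
    _ ≤ ∑ k ∈ Finset.range n, (Q ^ k *ᵥ 1) i :=
        Finset.sum_le_sum fun k hk => hanti (Finset.mem_range.1 hk).le i
    _ = (∑ k ∈ Finset.range n, Q ^ k *ᵥ 1) i := by rw [Finset.sum_apply]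
    _ ≤ π ⬝ᵥ 1 / exitRate π Q + L / a * 1 :=
        h.sum_pow_mulVec_le hQ hQp zero_le_one (fun _ => le_rfl) hD n i
    _ = 1 / exitRate π Q + L / a := by rw [dotProduct_one, h.sum_eq_one, mul_one]

lemma tendsto_pow_mulVec_one (h : IsUniformChain p π L a) (hQ : ∀ i j, 0 ≤ Q i j)
    (hQp : ∀ i j, Q i j ≤ p i j) (hD : 0 < exitRate π Q) (i : X) :
    Tendsto (fun n => (Q ^ n *ᵥ 1) i) atTop (𝓝 0) := by
  refine tendsto_of_tendsto_of_tendsto_of_le_of_le' tendsto_const_nhds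
    (tendsto_const_div_atTop_nhds_zero_nat (1 / exitRate π Q + L / a))
    (Eventually.of_forall fun n => pow_mulVec_nonneg hQ zero_le_one n i) ?_
  filter_upwards [eventually_gt_atTop 0] with n hn
  rw [le_div_iff₀' (Nat.cast_pos.2 hn)]
  exact h.mul_pow_mulVec_one_le hQ hQp hD n i

/- Both `E` and `1 - E` are limits of Green sums, of `v` and of `z` respectively, and their upper
bounds by `sum_pow_mulVec_le` add up to `1 + 2 * (L / a * κ)`. -/
lemma abs_sub_div_exitRate_le (h : IsUniformChain p π L a) (hQ : ∀ i j, 0 ≤ Q i j)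
    (hQp : ∀ i j, Q i j ≤ p i j) (hD : 0 < exitRate π Q) {v z : X → ℝ} (hv : 0 ≤ v) (hz : 0 ≤ z)
    (hvκ : ∀ i, v i ≤ κ) (hzκ : ∀ i, z i ≤ κ) (hvz : v + z = 1 - Q *ᵥ 1) {i : X} {E : ℝ}
    (hE : Tendsto (fun n => (∑ k ∈ Finset.range n, Q ^ k *ᵥ v) i) atTop (𝓝 E)) :
    |E - π ⬝ᵥ v / exitRate π Q| ≤ L / a * κ := by
  have hupper : E ≤ π ⬝ᵥ v / exitRate π Q + L / a * κ :=
    le_of_tendsto' hE fun n => h.sum_pow_mulVec_le hQ hQp hv hvκ hD n i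
  have hcompl : ∀ n, (∑ k ∈ Finset.range n, Q ^ k *ᵥ z) i
      = 1 - (Q ^ n *ᵥ 1) i - (∑ k ∈ Finset.range n, Q ^ k *ᵥ v) i := fun n => by
    have := congrFun (sum_pow_mulVec_one_sub Q n) i
    simp only [← hvz, Matrix.mulVec_add, Finset.sum_add_distrib, Pi.add_apply, Pi.sub_apply,
      Pi.one_apply] at this
    linarith
  have hE' : Tendsto (fun n => (∑ k ∈ Finset.range n, Q ^ k *ᵥ z) i) atTop (𝓝 (1 - 0 - E)) := by
    simp only [hcompl]
    exact (tendsto_const_nhds.sub (h.tendsto_pow_mulVec_one hQ hQp hD i)).sub hE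
  have hlower : 1 - 0 - E ≤ π ⬝ᵥ z / exitRate π Q + L / a * κ :=
    le_of_tendsto' hE' fun n => h.sum_pow_mulVec_le hQ hQp hz hzκ hD n i
  have hsum : π ⬝ᵥ v / exitRate π Q + π ⬝ᵥ z / exitRate π Q = 1 := by
    rw [← add_div, ← dotProduct_add, hvz, ← exitRate, div_self hD.ne']
  rw [abs_le]
  constructor <;> linarith

end IsUniformChain

end UniformChain

section MarkovRenewal

open scoped Matrix
open Function (update)

variable {X Ω : Type*}

/-- The event that `(η, ζ)` follows the states `I` and the marks `Z` up to time `n`; the initial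
mark `ζ 0` is left free, as it carries no information. -/
def pathCylinder (η : ℕ → Ω → X) (ζ : ℕ → Ω → Bool) (n : ℕ) (I : ℕ → X) (Z : ℕ → Bool) : Set Ω :=
  {ω | ∀ k ≤ n, (η k ω = I k ∧ (1 ≤ k → ζ k ω = Z k))}

/-- The product of the one-step transition weights along a path of length `n`. -/
def pathWeight (R : X → X → Bool → ℝ) (n : ℕ) (I : ℕ → X) (Z : ℕ → Bool) : ℝ :=
  ∏ k ∈ Finset.Icc 1 n, R (I (k - 1)) (I k) (Z k)

/-- Under each `P i`, the process `(η, ζ)` is a Markov chain on `X × Bool` started from the state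
`i`, whose step from `(i, z)` to `(j, z')` has the probability `R i j z'`, whatever `z` is. -/
structure IsMarkovRenewal [MeasurableSpace X] [MeasurableSpace Ω] (η : ℕ → Ω → X)
    (ζ : ℕ → Ω → Bool) (P : X → Measure Ω) (R : X → X → Bool → ℝ) : Prop where
  isProbabilityMeasure : ∀ i, IsProbabilityMeasure (P i)
  measurable_state : ∀ n, Measurable (η n)
  measurable_mark : ∀ n, Measurable (ζ n)
  nonneg : ∀ i j z, 0 ≤ R i j z
  measure_pathCylinder : ∀ n I Z,
    P (I 0) (pathCylinder η ζ n I Z) = ENNReal.ofReal (pathWeight R n I Z)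

/-- The transition matrix of the embedded chain. -/
def embedded (R : X → X → Bool → ℝ) : Matrix X X ℝ :=
  Matrix.of fun i j => R i j false + R i j true

/-- The transition matrix of the embedded chain killed at the first event, each visit to a state `i`
being weighted by `w i`. -/
def taboo (R : X → X → Bool → ℝ) (w : X → ℝ) : Matrix X X ℝ :=
  Matrix.of fun i j => w i * R i j false

/-- The probability that an event occurs in one step from the state `i`. -/
def eventProb [MeasurableSpace Ω] (ζ : ℕ → Ω → Bool) (P : X → Measure Ω) (i : X) : ℝ :=
  (P i).real {ω | ζ 1 ω = true}

/-- No event occurs in the first `n` steps. -/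
def noEvent (ζ : ℕ → Ω → Bool) (n : ℕ) : Set Ω :=
  {ω | ∀ k < n, ζ (k + 1) ω = false}

/-- The time of the first event, with the value `0` if there is none. -/
def firstEvent (ζ : ℕ → Ω → Bool) (ω : Ω) : ℕ :=
  sInf {n | 1 ≤ n ∧ ζ n ω = true}

/-- The reward accumulated over the first `n` steps, a visit to the state `i` being worth `u i`. -/
def reward (η : ℕ → Ω → X) (u : X → ℝ) (n : ℕ) (ω : Ω) : ℝ :=
  ∑ k ∈ Finset.range n, u (η k ω)

/-- The weight `e^{-u i}` which turns an accumulated reward into a Laplace transform. -/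
def discount (u : X → ℝ) (i : X) : ℝ :=
  Real.exp (-u i)

variable {η : ℕ → Ω → X} {ζ : ℕ → Ω → Bool} {R : X → X → Bool → ℝ}

lemma reward_nonneg {u : X → ℝ} (hu : 0 ≤ u) (n : ℕ) (ω : Ω) : 0 ≤ reward η u n ω :=
  Finset.sum_nonneg fun k _ => hu (η k ω)

lemma exp_neg_reward (u : X → ℝ) (n : ℕ) (ω : Ω) :
    Real.exp (-reward η u n ω) = ∏ k ∈ Finset.range n, discount u (η k ω) := by
  rw [reward, ← Finset.sum_neg_distrib, Real.exp_sum]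
  rfl

lemma exp_neg_reward_le_one {u : X → ℝ} (hu : 0 ≤ u) (n : ℕ) (ω : Ω) :
    Real.exp (-reward η u n ω) ≤ 1 :=
  Real.exp_le_one_iff.2 (neg_nonpos.2 (reward_nonneg hu n ω))

lemma reward_mono {u : X → ℝ} (hu : 0 ≤ u) (ω : Ω) : Monotone fun n => reward η u n ω :=
  fun _ _ hmn => Finset.sum_le_sum_of_subset_of_nonneg (Finset.range_mono hmn)
    fun k _ _ => hu (η k ω)

lemma discount_nonneg (u : X → ℝ) : 0 ≤ discount u := fun _ => (Real.exp_pos _).le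

lemma discount_le_one {u : X → ℝ} (hu : 0 ≤ u) : discount u ≤ 1 := fun i =>
  Real.exp_le_one_iff.2 (neg_nonpos.2 (hu i))

lemma one_sub_discount_le (u : X → ℝ) : 1 - discount u ≤ u := fun i => by
  have := Real.add_one_le_exp (-u i)
  simp only [discount, Pi.sub_apply, Pi.one_apply]
  linarith

lemma div_one_add_le_one_sub_discount {u : X → ℝ} (hu : 0 ≤ u) (i : X) :
    u i / (1 + u i) ≤ (1 - discount u) i := by
  have hpos : 0 < 1 + u i := by linarith [hu i, Pi.zero_apply (M := fun _ => ℝ) i]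
  have hexp : Real.exp (-u i) ≤ (1 + u i)⁻¹ := by
    rw [Real.exp_neg]
    exact inv_anti₀ hpos (by linarith [Real.add_one_le_exp (u i)])
  calc u i / (1 + u i) = 1 - (1 + u i)⁻¹ := by field_simp; ring
    _ ≤ (1 - discount u) i := sub_le_sub_left hexp 1

lemma mem_noEvent_iff {n : ℕ} {ω : Ω} :
    ω ∈ noEvent ζ n ↔ firstEvent ζ ω = 0 ∨ n < firstEvent ζ ω := by
  constructor
  · intro h
    rcases Set.eq_empty_or_nonempty {n | 1 ≤ n ∧ ζ n ω = true} with hempty | hne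
    · exact Or.inl (by rw [firstEvent, hempty, Nat.sInf_empty])
    · refine Or.inr (not_le.1 fun hle => ?_)
      obtain ⟨hpos, htrue⟩ : 1 ≤ firstEvent ζ ω ∧ ζ (firstEvent ζ ω) ω = true := Nat.sInf_mem hne
      have := h (firstEvent ζ ω - 1) (by omega)
      rw [Nat.sub_add_cancel hpos, htrue] at this
      exact Bool.noConfusion this
  · rintro h k hk
    rw [← Bool.not_eq_true]
    intro htrue
    have hmem : k + 1 ∈ {n | 1 ≤ n ∧ ζ n ω = true} := ⟨by omega, htrue⟩
    have hle : firstEvent ζ ω ≤ k + 1 := Nat.sInf_le hmem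
    have hpos : 1 ≤ firstEvent ζ ω := (Nat.sInf_mem ⟨_, hmem⟩).1
    omega

lemma firstEvent_eq_zero_iff {ω : Ω} : firstEvent ζ ω = 0 ↔ ∀ n, ω ∈ noEvent ζ n := by
  refine ⟨fun h n => mem_noEvent_iff.2 (Or.inl h), fun h => ?_⟩
  exact (mem_noEvent_iff.1 (h (firstEvent ζ ω))).resolve_right (lt_irrefl _)

lemma firstEvent_eq_succ_iff {n : ℕ} {ω : Ω} :
    firstEvent ζ ω = n + 1 ↔ ω ∈ noEvent ζ n \ noEvent ζ (n + 1) := by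
  rw [Set.mem_sdiff, mem_noEvent_iff, mem_noEvent_iff]
  omega

lemma noEvent_antitone : Antitone (noEvent ζ) := fun _ _ hmn _ h k hk => h k (hk.trans_le hmn)

lemma pathWeight_update_succ (n : ℕ) (I : ℕ → X) (Z : ℕ → Bool) (j : X) (z : Bool) :
    pathWeight R (n + 1) (update I (n + 1) j) (update Z (n + 1) z)
      = pathWeight R n I Z * R (I n) j z := by
  rw [pathWeight, Finset.prod_Icc_succ_top (by omega)]
  congr 1
  · refine Finset.prod_congr rfl fun k hk => ?_
    obtain ⟨-, hk⟩ := Finset.mem_Icc.1 hk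
    rw [Function.update_of_ne (by omega), Function.update_of_ne (by omega),
      Function.update_of_ne (by omega)]
  · simp

lemma pathCylinder_inter_mark (n : ℕ) (I : ℕ → X) (Z : ℕ → Bool) (z : Bool) :
    pathCylinder η ζ n I Z ∩ {ω | ζ (n + 1) ω = z}
      = ⋃ j, pathCylinder η ζ (n + 1) (update I (n + 1) j) (update Z (n + 1) z) := by
  ext ω
  simp only [pathCylinder, mem_inter_iff, mem_ofPred_eq, mem_iUnion]
  constructor
  · rintro ⟨hpath, hmark⟩
    refine ⟨η (n + 1) ω, fun k hk => ?_⟩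
    rcases hk.lt_or_eq with hlt | rfl
    · simpa [Function.update_of_ne hlt.ne] using hpath k (Nat.lt_succ_iff.1 hlt)
    · simpa using hmark
  · rintro ⟨j, hpath⟩
    refine ⟨fun k hk => ?_, by simpa using (hpath (n + 1) le_rfl).2 (by omega)⟩
    simpa [Function.update_of_ne (Nat.lt_succ_of_le hk).ne] using hpath k (by omega)

lemma pathCylinder_update_succ_subset (n : ℕ) (I : ℕ → X) (Z : ℕ → Bool) (j : X) (z : Bool) :
    pathCylinder η ζ (n + 1) (update I (n + 1) j) (update Z (n + 1) z) ⊆ pathCylinder η ζ n I Z :=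
  ((subset_iUnion _ j).trans_eq (pathCylinder_inter_mark n I Z z).symm).trans inter_subset_left

lemma exists_pathCylinder_subset_of_reflTransGen (n : ℕ) (I : ℕ → X) (Z : ℕ → Bool) {j : X}
    (hreach : Relation.ReflTransGen (fun i j => ∃ z, 0 < R i j z) (I n) j) :
    ∃ n' I' Z' W, 0 < W ∧ I' 0 = I 0 ∧ I' n' = j ∧
      pathWeight R n' I' Z' = pathWeight R n I Z * W ∧
      pathCylinder η ζ n' I' Z' ⊆ pathCylinder η ζ n I Z := by
  induction hreach with
  | refl => exact ⟨n, I, Z, 1, one_pos, rfl, rfl, (mul_one _).symm, Subset.rfl⟩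
  | @tail j k _ hedge ih =>
    obtain ⟨n', I', Z', W, hW, hstart, rfl, hweight, hsub⟩ := ih
    obtain ⟨z, hz⟩ := hedge
    refine ⟨n' + 1, update I' (n' + 1) k, update Z' (n' + 1) z, W * R (I' n') k z, mul_pos hW hz,
      by rw [Function.update_of_ne (by omega), hstart], Function.update_self .., ?_,
      (pathCylinder_update_succ_subset n' I' Z' k z).trans hsub⟩
    rw [pathWeight_update_succ, hweight, mul_assoc]

lemma pathCylinder_inter_noEvent (l n : ℕ) (I : ℕ → X) (Z : ℕ → Bool) :
    pathCylinder η ζ l I Z ∩ noEvent (fun k => ζ (l + k)) (n + 1)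
      = ⋃ j, pathCylinder η ζ (l + 1) (update I (l + 1) j) (update Z (l + 1) false) ∩
          noEvent (fun k => ζ (l + 1 + k)) n := by
  rw [← iUnion_inter, ← pathCylinder_inter_mark]
  ext ω
  simp only [noEvent, mem_inter_iff, mem_ofPred_eq, Nat.forall_lt_succ_left', and_assoc,
    zero_add, add_assoc, add_comm 1]

lemma pairwise_disjoint_pathCylinder (n : ℕ) (I : ℕ → X) (Z : ℕ → Bool) :
    Pairwise (Function.onFun Disjoint fun j => pathCylinder η ζ n (update I n j) Z) := by
  intro j j' hne
  refine Set.disjoint_left.2 fun ω hω hω' => hne ?_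
  simpa using (hω n le_rfl).1.symm.trans (hω' n le_rfl).1

variable [MeasurableSpace Ω] {P : X → Measure Ω}

lemma eventProb_nonneg : 0 ≤ eventProb ζ P := fun _ => measureReal_nonneg

lemma measurableSet_noEvent (hζ : ∀ n, Measurable (ζ n)) (n : ℕ) : MeasurableSet (noEvent ζ n) := by
  unfold noEvent
  measurability

lemma measurable_firstEvent (hζ : ∀ n, Measurable (ζ n)) : Measurable (firstEvent ζ) := by
  refine measurable_to_countable' fun n => ?_
  cases n with
  | zero =>
    have : firstEvent ζ ⁻¹' {0} = ⋂ n, noEvent ζ n := by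
      ext ω
      simp [firstEvent_eq_zero_iff]
    exact this ▸ MeasurableSet.iInter (measurableSet_noEvent hζ)
  | succ n =>
    have : firstEvent ζ ⁻¹' {n + 1} = noEvent ζ n \ noEvent ζ (n + 1) := by
      ext ω
      exact firstEvent_eq_succ_iff
    exact this ▸ (measurableSet_noEvent hζ n).diff (measurableSet_noEvent hζ (n + 1))

-- If `R i j z < 0`, the cylinder of the step from `i` to `(j, z)` is null, although going back to
-- `i` along positive weights and repeating the step has a positive weight.
lemma nonneg_of_measure_pathCylinder
    (hlaw : ∀ n I Z, P (I 0) (pathCylinder η ζ n I Z) = ENNReal.ofReal (pathWeight R n I Z))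
    (hreach : ∀ i j, Relation.ReflTransGen (fun i j => ∃ z, 0 < R i j z) i j) (i j : X)
    (z : Bool) : 0 ≤ R i j z := by
  by_contra! hneg
  let I : ℕ → X := update (fun _ => i) (0 + 1) j
  let Z : ℕ → Bool := update (fun _ => z) (0 + 1) z
  have hstep : pathWeight R (0 + 1) I Z = R i j z := by
    rw [pathWeight_update_succ]
    simp [pathWeight]
  obtain ⟨n, I', Z', W, hW, hstart, hend, hweight, hsub⟩ :=
    exists_pathCylinder_subset_of_reflTransGen (η := η) (ζ := ζ) (0 + 1) I Z (hreach (I (0 + 1)) i)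
  have hnull : P (I 0) (pathCylinder η ζ (n + 1) (update I' (n + 1) j) (update Z' (n + 1) z)) = 0 :=
    measure_mono_null ((pathCylinder_update_succ_subset n I' Z' j z).trans hsub) <| by
      rw [hlaw, hstep, ENNReal.ofReal_of_nonpos hneg.le]
  have hI0 : I 0 = update I' (n + 1) j 0 := by rw [Function.update_of_ne (by omega), hstart]
  rw [hI0, hlaw, ENNReal.ofReal_eq_zero, pathWeight_update_succ, hweight, hstep, hend] at hnull
  nlinarith [mul_pos (mul_pos_of_neg_of_neg hneg hneg) hW]

namespace IsMarkovRenewal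

variable [MeasurableSpace X]

lemma eventProb_le_one (h : IsMarkovRenewal η ζ P R) : eventProb ζ P ≤ 1 := fun i =>
  have := h.isProbabilityMeasure i
  measureReal_le_one

lemma pathWeight_nonneg (h : IsMarkovRenewal η ζ P R) (n : ℕ) (I : ℕ → X) (Z : ℕ → Bool) :
    0 ≤ pathWeight R n I Z :=
  Finset.prod_nonneg fun _ _ => h.nonneg _ _ _

lemma taboo_nonneg (h : IsMarkovRenewal η ζ P R) {w : X → ℝ} (hw : 0 ≤ w) (i j : X) :
    0 ≤ taboo R w i j :=
  mul_nonneg (hw i) (h.nonneg i j false)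

lemma taboo_le_embedded (h : IsMarkovRenewal η ζ P R) {w : X → ℝ} (hw : w ≤ 1) (i j : X) :
    taboo R w i j ≤ embedded R i j :=
  (mul_le_of_le_one_left (h.nonneg i j false) (hw i)).trans
    (le_add_of_nonneg_right (h.nonneg i j true))

lemma measureReal_pathCylinder (h : IsMarkovRenewal η ζ P R) (n : ℕ) (I : ℕ → X) (Z : ℕ → Bool) :
    (P (I 0)).real (pathCylinder η ζ n I Z) = pathWeight R n I Z := by
  rw [Measure.real, h.measure_pathCylinder, ENNReal.toReal_ofReal (h.pathWeight_nonneg n I Z)]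

variable [MeasurableSingletonClass X]

lemma measurableSet_pathCylinder (h : IsMarkovRenewal η ζ P R) (n : ℕ)
    (I : ℕ → X) (Z : ℕ → Bool) : MeasurableSet (pathCylinder η ζ n I Z) := by
  have := h.measurable_state
  have := h.measurable_mark
  unfold pathCylinder
  measurability

lemma measurable_reward [Countable X] (h : IsMarkovRenewal η ζ P R) (u : X → ℝ) (n : ℕ) :
    Measurable (reward η u n) :=
  Finset.measurable_sum _ fun k _ => (measurable_of_countable u).comp (h.measurable_state k)

lemma measurable_reward_firstEvent [Countable X] (h : IsMarkovRenewal η ζ P R) (u : X → ℝ) :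
    Measurable fun ω => reward η u (firstEvent ζ ω) ω :=
  (measurable_from_prod_countable_right (f := fun x : ℕ × Ω => reward η u x.1 x.2)
    (h.measurable_reward u)).comp ((measurable_firstEvent h.measurable_mark).prodMk measurable_id)

lemma integrable_exp_neg_reward [Countable X] (h : IsMarkovRenewal η ζ P R) {u : X → ℝ}
    (hu : 0 ≤ u) (n : ℕ) (i : X) : Integrable (fun ω => Real.exp (-reward η u n ω)) (P i) := by
  have := h.isProbabilityMeasure i
  refine Integrable.of_bound (h.measurable_reward u n).neg.exp.aestronglyMeasurable 1
    (Eventually.of_forall fun ω => ?_)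
  simpa using reward_nonneg hu n ω

lemma integrable_exp_neg_reward_firstEvent [Countable X] (h : IsMarkovRenewal η ζ P R)
    {u : X → ℝ} (hu : 0 ≤ u) (i : X) :
    Integrable (fun ω => Real.exp (-reward η u (firstEvent ζ ω) ω)) (P i) := by
  have := h.isProbabilityMeasure i
  refine Integrable.of_bound (h.measurable_reward_firstEvent u).neg.exp.aestronglyMeasurable 1
    (Eventually.of_forall fun ω => ?_)
  simpa using reward_nonneg hu _ ω

lemma integral_exp_neg_reward_anti [Countable X] (h : IsMarkovRenewal η ζ P R) {u u' : X → ℝ}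
    (hu : 0 ≤ u) (huu' : u ≤ u') (i : X) :
    ∫ ω, Real.exp (-reward η u' (firstEvent ζ ω) ω) ∂P i
      ≤ ∫ ω, Real.exp (-reward η u (firstEvent ζ ω) ω) ∂P i :=
  integral_mono (h.integrable_exp_neg_reward_firstEvent (hu.trans huu') i)
    (h.integrable_exp_neg_reward_firstEvent hu i) fun ω => Real.exp_le_exp.2
      (neg_le_neg (Finset.sum_le_sum fun k _ => huu' (η k ω)))

lemma integrable_prod_mul [Finite X] (h : IsMarkovRenewal η ζ P R) (w g : X → ℝ) (l n : ℕ)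
    (i : X) :
    Integrable (fun ω => (∏ k ∈ Finset.range n, w (η (l + k) ω)) * g (η (l + n) ω)) (P i) := by
  have := h.isProbabilityMeasure i
  have hpath : Measurable fun ω (k : Fin (n + 1)) => η (l + k) ω :=
    measurable_pi_lambda _ fun k => h.measurable_state (l + k)
  have := (Integrable.of_finite (μ := (P i).map fun ω (k : Fin (n + 1)) => η (l + k) ω)
    (f := fun x => (∏ k : Fin n, w (x k.castSucc)) * g (x (Fin.last n)))).comp_measurable hpath
  simpa [Function.comp_def, Finset.prod_range] using this

lemma ae_eq_start (h : IsMarkovRenewal η ζ P R) (i : X) : ∀ᵐ ω ∂P i, η 0 ω = i := by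
  have := h.isProbabilityMeasure i
  have hone := h.measure_pathCylinder 0 (fun _ => i) fun _ => false
  refine (mem_ae_iff_prob_eq_one (h.measurable_state 0 (measurableSet_singleton i))).2 ?_
  simpa [pathCylinder, pathWeight, preimage] using hone

variable [Fintype X]

/- Fixing the path up to time `l` makes an induction on the number `n` of later steps possible: the
first of them extends the path, by the Markov property. -/
lemma setIntegral_pathCylinder_inter [DecidableEq X] (h : IsMarkovRenewal η ζ P R) (w g : X → ℝ)
    (n l : ℕ) (I : ℕ → X) (Z : ℕ → Bool) :
    ∫ ω in pathCylinder η ζ l I Z ∩ noEvent (fun k => ζ (l + k)) n,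
        (∏ k ∈ Finset.range n, w (η (l + k) ω)) * g (η (l + n) ω) ∂P (I 0)
      = pathWeight R l I Z * (taboo R w ^ n *ᵥ g) (I l) := by
  induction n generalizing l I Z with
  | zero =>
    have hconst : EqOn (fun ω => g (η l ω)) (fun _ => g (I l)) (pathCylinder η ζ l I Z) :=
      fun ω hω => congrArg g (hω l le_rfl).1
    simpa [noEvent, h.measureReal_pathCylinder] using
      setIntegral_congr_fun (μ := P (I 0)) (h.measurableSet_pathCylinder l I Z) hconst
  | succ n ih =>
    set cyl : X → Set Ω := fun j =>
      pathCylinder η ζ (l + 1) (update I (l + 1) j) (update Z (l + 1) false)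
    set tail : Set Ω := noEvent (fun k => ζ (l + 1 + k)) n
    have hmeas : ∀ j, MeasurableSet (cyl j ∩ tail) := fun j =>
      (h.measurableSet_pathCylinder _ _ _).inter
        (measurableSet_noEvent (fun k => h.measurable_mark (l + 1 + k)) n)
    have hpiece : ∀ j,
        ∫ ω in cyl j ∩ tail,
          (∏ k ∈ Finset.range (n + 1), w (η (l + k) ω)) * g (η (l + (n + 1)) ω) ∂P (I 0)
        = pathWeight R l I Z * (taboo R w (I l) j * (taboo R w ^ n *ᵥ g) j) := fun j => by
      have hcongr : EqOn
          (fun ω => (∏ k ∈ Finset.range (n + 1), w (η (l + k) ω)) * g (η (l + (n + 1)) ω))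
          (fun ω => w (I l) * ((∏ k ∈ Finset.range n, w (η (l + 1 + k) ω)) *
            g (η (l + 1 + n) ω))) (cyl j ∩ tail) := fun ω hω => by
        have hl : η l ω = I l := by simpa using (hω.1 l (Nat.le_succ l)).1
        simp only [Finset.prod_range_succ', add_zero, hl, add_assoc, add_comm 1]
        ring
      have hih := ih (l + 1) (update I (l + 1) j) (update Z (l + 1) false)
      rw [Function.update_of_ne (by omega), Function.update_self, pathWeight_update_succ] at hih
      rw [setIntegral_congr_fun (hmeas j) hcongr, integral_const_mul, hih, taboo, Matrix.of_apply]
      ring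
    rw [pathCylinder_inter_noEvent, integral_iUnion_fintype hmeas
      (fun j j' hne => (pairwise_disjoint_pathCylinder _ _ _ hne).mono inter_subset_left
        inter_subset_left)
      (fun j => (h.integrable_prod_mul w g l (n + 1) (I 0)).integrableOn), pow_succ',
      ← Matrix.mulVec_mulVec]
    simp only [hpiece, ← Finset.mul_sum]
    rfl

lemma setIntegral_noEvent [DecidableEq X] (h : IsMarkovRenewal η ζ P R) (w g : X → ℝ) (n : ℕ)
    (i : X) :
    ∫ ω in noEvent ζ n, (∏ k ∈ Finset.range n, w (η k ω)) * g (η n ω) ∂P i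
      = (taboo R w ^ n *ᵥ g) i := by
  have hpath := h.setIntegral_pathCylinder_inter w g n 0 (fun _ => i) fun _ => false
  simp only [zero_add, pathWeight, Finset.Icc_eq_empty_of_lt zero_lt_one, Finset.prod_empty,
    one_mul] at hpath
  rw [← hpath]
  refine setIntegral_congr_set (eventuallyEq_set.2 ?_)
  filter_upwards [h.ae_eq_start i] with ω hω
  simp [pathCylinder, hω]

lemma measureReal_mark_one (h : IsMarkovRenewal η ζ P R) (i : X) (z : Bool) :
    (P i).real {ω | ζ 1 ω = z} = ∑ j, R i j z := by
  have := h.isProbabilityMeasure i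
  set cyl : X → Set Ω := fun j => pathCylinder η ζ 1 (update (fun _ => i) 1 j) fun _ => z with hcyl
  have hset : {ω | ζ 1 ω = z} =ᵐ[P i] ⋃ j, cyl j := by
    have hsplit := pathCylinder_inter_mark (η := η) (ζ := ζ) 0 (fun _ => i) (fun _ => z) z
    rw [zero_add, Function.update_eq_self] at hsplit
    rw [hcyl, ← hsplit]
    refine eventuallyEq_set.2 ?_
    filter_upwards [h.ae_eq_start i] with ω hω
    simp [pathCylinder, hω]
  rw [measureReal_congr hset, measureReal_iUnion_fintype
    (fun j j' hne => pairwise_disjoint_pathCylinder _ _ _ hne)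
    (fun j => h.measurableSet_pathCylinder _ _ _)]
  refine Finset.sum_congr rfl fun j _ => ?_
  have := h.measureReal_pathCylinder 1 (update (fun _ => i) 1 j) fun _ => z
  simpa [pathWeight] using this

lemma measureReal_noEvent [DecidableEq X] (h : IsMarkovRenewal η ζ P R) (n : ℕ) (i : X) :
    (P i).real (noEvent ζ n) = (taboo R 1 ^ n *ᵥ 1) i := by
  simpa using h.setIntegral_noEvent 1 1 n i

lemma sum_add_eventProb (h : IsMarkovRenewal η ζ P R) (i : X) :
    ∑ j, R i j false + eventProb ζ P i = 1 := by
  have := h.isProbabilityMeasure i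
  have hcompl : {ω | ζ 1 ω = true} = {ω | ζ 1 ω = false}ᶜ := by
    ext ω
    simp
  have hmeas : MeasurableSet {ω | ζ 1 ω = false} :=
    h.measurable_mark 1 (measurableSet_singleton false)
  rw [eventProb, ← h.measureReal_mark_one, hcompl, measureReal_add_measureReal_compl hmeas,
    probReal_univ]

lemma embedded_mem_rowStochastic [DecidableEq X] (h : IsMarkovRenewal η ζ P R) :
    embedded R ∈ Matrix.rowStochastic ℝ X :=
  Matrix.mem_rowStochastic_iff_sum.2
    ⟨fun i j => add_nonneg (h.nonneg i j false) (h.nonneg i j true), fun i => by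
      simpa [embedded, Finset.sum_add_distrib, eventProb, h.measureReal_mark_one] using
        h.sum_add_eventProb i⟩

lemma taboo_mulVec_one (h : IsMarkovRenewal η ζ P R) (w : X → ℝ) :
    taboo R w *ᵥ 1 = w - w * eventProb ζ P := by
  ext i
  simp only [taboo, Matrix.mulVec, dotProduct, Matrix.of_apply, Pi.one_apply, mul_one,
    ← Finset.mul_sum, Pi.sub_apply, Pi.mul_apply]
  rw [eq_sub_of_add_eq (h.sum_add_eventProb i), mul_sub, mul_one]

lemma setIntegral_exp_neg_reward [DecidableEq X] (h : IsMarkovRenewal η ζ P R) (u : X → ℝ) (n : ℕ)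
    (i : X) :
    ∫ ω in noEvent ζ n, Real.exp (-reward η u n ω) ∂P i = (taboo R (discount u) ^ n *ᵥ 1) i := by
  simpa [exp_neg_reward] using h.setIntegral_noEvent (discount u) 1 n i

lemma setIntegral_exp_neg_reward_succ [DecidableEq X] (h : IsMarkovRenewal η ζ P R) (u : X → ℝ)
    (n : ℕ) (i : X) :
    ∫ ω in noEvent ζ n, Real.exp (-reward η u (n + 1) ω) ∂P i
      = (taboo R (discount u) ^ n *ᵥ discount u) i := by
  simpa [exp_neg_reward, Finset.prod_range_succ] using h.setIntegral_noEvent (discount u) _ n i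

lemma setIntegral_firstEvent_eq_succ [DecidableEq X] (h : IsMarkovRenewal η ζ P R) {u : X → ℝ}
    (hu : 0 ≤ u) (n : ℕ) (i : X) :
    ∫ ω in noEvent ζ n \ noEvent ζ (n + 1), Real.exp (-reward η u (firstEvent ζ ω) ω) ∂P i
      = (taboo R (discount u) ^ n *ᵥ (discount u * eventProb ζ P)) i := by
  have hmeas := measurableSet_noEvent h.measurable_mark
  have hv : discount u * eventProb ζ P = discount u - taboo R (discount u) *ᵥ 1 := by
    rw [h.taboo_mulVec_one, sub_sub_cancel]
  calc ∫ ω in noEvent ζ n \ noEvent ζ (n + 1), Real.exp (-reward η u (firstEvent ζ ω) ω) ∂P i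
      = ∫ ω in noEvent ζ n \ noEvent ζ (n + 1), Real.exp (-reward η u (n + 1) ω) ∂P i :=
        setIntegral_congr_fun ((hmeas n).diff (hmeas (n + 1))) fun ω hω => by
          rw [firstEvent_eq_succ_iff.2 hω]
    _ = (taboo R (discount u) ^ n *ᵥ discount u) i
        - (taboo R (discount u) ^ (n + 1) *ᵥ 1) i := by
        rw [setIntegral_sdiff (hmeas (n + 1))
          (h.integrable_exp_neg_reward hu (n + 1) i).integrableOn (noEvent_antitone n.le_succ),
          h.setIntegral_exp_neg_reward_succ,
          h.setIntegral_exp_neg_reward]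
    _ = (taboo R (discount u) ^ n *ᵥ (discount u * eventProb ζ P)) i := by
        rw [hv, Matrix.mulVec_sub, Matrix.mulVec_mulVec, ← pow_succ, Pi.sub_apply]

lemma setIntegral_compl_noEvent [DecidableEq X] (h : IsMarkovRenewal η ζ P R) {u : X → ℝ}
    (hu : 0 ≤ u) (n : ℕ) (i : X) :
    ∫ ω in (noEvent ζ n)ᶜ, Real.exp (-reward η u (firstEvent ζ ω) ω) ∂P i
      = (∑ k ∈ Finset.range n, taboo R (discount u) ^ k *ᵥ (discount u * eventProb ζ P)) i := by
  have hmeas := measurableSet_noEvent h.measurable_mark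
  induction n with
  | zero => simp [noEvent]
  | succ n ih =>
    have hsplit : (noEvent ζ (n + 1))ᶜ
        = (noEvent ζ n)ᶜ ∪ (noEvent ζ n \ noEvent ζ (n + 1)) := by
      ext ω
      have : ω ∈ noEvent ζ (n + 1) → ω ∈ noEvent ζ n := fun hω => noEvent_antitone n.le_succ hω
      simp only [mem_compl_iff, mem_union, Set.mem_sdiff]
      tauto
    have hint := h.integrable_exp_neg_reward_firstEvent hu i
    rw [hsplit, setIntegral_union (disjoint_compl_left.mono_right sdiff_subset)
      ((hmeas n).diff (hmeas (n + 1))) hint.integrableOn hint.integrableOn, ih,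
      h.setIntegral_firstEvent_eq_succ hu, Finset.sum_range_succ, Pi.add_apply]

lemma tendsto_sum_pow_taboo [DecidableEq X] (h : IsMarkovRenewal η ζ P R) {u : X → ℝ} (hu : 0 ≤ u)
    {i : X} (hev : Tendsto (fun n => (P i).real (noEvent ζ n)) atTop (𝓝 0)) :
    Tendsto
      (fun n =>
        (∑ k ∈ Finset.range n, taboo R (discount u) ^ k *ᵥ (discount u * eventProb ζ P)) i)
      atTop (𝓝 (∫ ω, Real.exp (-reward η u (firstEvent ζ ω) ω) ∂P i)) := by
  have := h.isProbabilityMeasure i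
  have hint := h.integrable_exp_neg_reward_firstEvent hu i
  refine tendsto_iff_norm_sub_tendsto_zero.2 (squeeze_zero (fun _ => norm_nonneg _) (fun n => ?_)
    hev)
  rw [← h.setIntegral_compl_noEvent hu, ← integral_add_compl
    (measurableSet_noEvent h.measurable_mark n) hint, norm_sub_rev, add_sub_cancel_right]
  simpa using norm_setIntegral_le_of_norm_le_const (measure_lt_top (P i) (noEvent ζ n))
    fun ω _ => (Real.norm_of_nonneg (Real.exp_pos _).le).trans_le (exp_neg_reward_le_one hu _ ω)

lemma exitRate_taboo (h : IsMarkovRenewal η ζ P R) (π w : X → ℝ) :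
    exitRate π (taboo R w) = π ⬝ᵥ (w * eventProb ζ P) + π ⬝ᵥ (1 - w) := by
  rw [exitRate, h.taboo_mulVec_one, ← dotProduct_add]
  congr 1
  ring

lemma dotProduct_eventProb_le_exitRate (h : IsMarkovRenewal η ζ P R) {π w : X → ℝ} (hπ : 0 ≤ π)
    (hw : w ≤ 1) : π ⬝ᵥ eventProb ζ P ≤ exitRate π (taboo R w) := by
  refine dotProduct_le_dotProduct_of_nonneg_left ?_ hπ
  rw [h.taboo_mulVec_one, ← sub_nonneg]
  have : 1 - (w - w * eventProb ζ P) - eventProb ζ P = (1 - w) * (1 - eventProb ζ P) := by ring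
  rw [this]
  exact mul_nonneg (sub_nonneg.2 hw) (sub_nonneg.2 h.eventProb_le_one)

variable [DecidableEq X] {π u : X → ℝ} {L : ℕ} {a : ℝ}

lemma tendsto_measureReal_noEvent (h : IsMarkovRenewal η ζ P R)
    (hc : IsUniformChain (embedded R) π L a) (hδ : 0 < π ⬝ᵥ eventProb ζ P) (i : X) :
    Tendsto (fun n => (P i).real (noEvent ζ n)) atTop (𝓝 0) := by
  simp only [h.measureReal_noEvent]
  exact hc.tendsto_pow_mulVec_one (h.taboo_nonneg zero_le_one) (h.taboo_le_embedded le_rfl)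
    (hδ.trans_le (h.dotProduct_eventProb_le_exitRate hc.nonneg le_rfl)) i

lemma abs_integral_exp_sub_exitRate_le (h : IsMarkovRenewal η ζ P R)
    (hc : IsUniformChain (embedded R) π L a) (hδ : 0 < π ⬝ᵥ eventProb ζ P) (hu : 0 ≤ u) (i : X) :
    |∫ ω, Real.exp (-reward η u (firstEvent ζ ω) ω) ∂P i
        - π ⬝ᵥ (discount u * eventProb ζ P) / exitRate π (taboo R (discount u))|
      ≤ L / a * (Fintype.card X / a * (π ⬝ᵥ eventProb ζ P + π ⬝ᵥ u)) := by
  have hw := discount_nonneg u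
  have hw1 := discount_le_one hu
  have hr : 0 ≤ eventProb ζ P := eventProb_nonneg
  have hκ : ∀ θ : X → ℝ, 0 ≤ θ → θ ≤ eventProb ζ P + u →
      ∀ i, θ i ≤ Fintype.card X / a * (π ⬝ᵥ eventProb ζ P + π ⬝ᵥ u) := fun θ hθ hle i => by
    rw [← dotProduct_add]
    exact (hle i).trans (hc.apply_le_mul_dotProduct (hθ.trans hle) i)
  have hv : 0 ≤ discount u * eventProb ζ P := mul_nonneg hw hr
  have hz : 0 ≤ 1 - discount u := sub_nonneg.2 hw1
  refine hc.abs_sub_div_exitRate_le (h.taboo_nonneg hw) (h.taboo_le_embedded hw1)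
    (hδ.trans_le (h.dotProduct_eventProb_le_exitRate hc.nonneg hw1)) hv hz (hκ _ hv ?_) (hκ _ hz ?_)
    ?_ (h.tendsto_sum_pow_taboo hu (h.tendsto_measureReal_noEvent hc hδ i))
  · exact (mul_le_of_le_one_left hr hw1).trans (le_add_of_nonneg_right hu)
  · exact (one_sub_discount_le u).trans (le_add_of_nonneg_left hr)
  · rw [h.taboo_mulVec_one]
    ring

lemma abs_exitRate_sub_le (h : IsMarkovRenewal η ζ P R)
    (hc : IsUniformChain (embedded R) π L a) (hδ : 0 < π ⬝ᵥ eventProb ζ P) (hu : 0 ≤ u) :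
    |π ⬝ᵥ (discount u * eventProb ζ P) / exitRate π (taboo R (discount u))
        - π ⬝ᵥ eventProb ζ P / (π ⬝ᵥ eventProb ζ P + π ⬝ᵥ u)|
      ≤ Fintype.card X / a * π ⬝ᵥ u := by
  set γ := Fintype.card X / a * π ⬝ᵥ u
  have hγ : ∀ i, u i ≤ γ := hc.apply_le_mul_dotProduct hu
  have hτ : 0 ≤ π ⬝ᵥ u := dotProduct_nonneg_of_nonneg hc.nonneg hu
  have hr : 0 ≤ eventProb ζ P := eventProb_nonneg
  have hw1 := discount_le_one hu
  have hmono := fun {x y : X → ℝ} (hxy : x ≤ y) =>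
    dotProduct_le_dotProduct_of_nonneg_left hxy hc.nonneg
  have hscale : ∀ x : X → ℝ, (1 - γ) * π ⬝ᵥ x = π ⬝ᵥ ((1 - γ) • x) := fun x => by
    rw [dotProduct_smul, smul_eq_mul]
  have hD := hδ.trans_le (h.dotProduct_eventProb_le_exitRate hc.nonneg hw1)
  rw [h.exitRate_taboo] at hD ⊢
  refine abs_div_add_sub_div_add_le
    (dotProduct_nonneg_of_nonneg hc.nonneg (mul_nonneg (discount_nonneg u) hr))
    (dotProduct_nonneg_of_nonneg hc.nonneg (sub_nonneg.2 hw1)) hD (by positivity)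
    (mul_nonneg (div_nonneg (Nat.cast_nonneg _) hc.pos.le) hτ)
    (hmono (mul_le_of_le_one_left hr hw1))
    (hmono (one_sub_discount_le u)) ?_ ?_
  · rw [hscale]
    refine hmono fun i => mul_le_mul_of_nonneg_right ?_ (hr i)
    have : 1 - discount u i ≤ u i := one_sub_discount_le u i
    linarith [hγ i]
  · rw [hscale]
    refine hmono fun i => le_trans ?_ (div_one_add_le_one_sub_discount hu i)
    have hui : 0 ≤ u i := hu i
    rw [Pi.smul_apply, smul_eq_mul, le_div_iff₀ (by positivity)]
    nlinarith [hγ i, mul_nonneg hui hui, mul_nonneg hui (sub_nonneg.2 (hγ i))]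

lemma abs_integral_exp_sub_le (h : IsMarkovRenewal η ζ P R)
    (hc : IsUniformChain (embedded R) π L a) (hδ : 0 < π ⬝ᵥ eventProb ζ P) (hu : 0 ≤ u) (i : X) :
    |∫ ω, Real.exp (-reward η u (firstEvent ζ ω) ω) ∂P i
        - π ⬝ᵥ eventProb ζ P / (π ⬝ᵥ eventProb ζ P + π ⬝ᵥ u)|
      ≤ (L / a + 1) * (Fintype.card X / a) * (π ⬝ᵥ eventProb ζ P + π ⬝ᵥ u) := by
  have hcard : 0 ≤ Fintype.card X / a * π ⬝ᵥ eventProb ζ P :=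
    mul_nonneg (div_nonneg (Nat.cast_nonneg _) hc.pos.le) hδ.le
  refine (abs_sub_le _ _ _).trans ((add_le_add (h.abs_integral_exp_sub_exitRate_le hc hδ hu i)
    (h.abs_exitRate_sub_le hc hδ hu)).trans ?_)
  linarith

/- When the mean reward `π ⬝ᵥ u` is too large for `abs_integral_exp_sub_le`, both terms are small:
shrinking `u` until `π ⬝ᵥ eventProb ζ P + π ⬝ᵥ u = √(π ⬝ᵥ eventProb ζ P)` only increases them. -/
lemma abs_integral_exp_sub_le_sqrt (h : IsMarkovRenewal η ζ P R)
    (hc : IsUniformChain (embedded R) π L a) (hδ : 0 < π ⬝ᵥ eventProb ζ P) (hu : 0 ≤ u) (i : X) :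
    |∫ ω, Real.exp (-reward η u (firstEvent ζ ω) ω) ∂P i
        - π ⬝ᵥ eventProb ζ P / (π ⬝ᵥ eventProb ζ P + π ⬝ᵥ u)|
      ≤ ((L / a + 1) * (Fintype.card X / a) + 1) * √(π ⬝ᵥ eventProb ζ P) := by
  have hclose := fun {u : X → ℝ} (hu : 0 ≤ u) => h.abs_integral_exp_sub_le hc hδ hu i
  have hδ1 := hc.dotProduct_le_one h.eventProb_le_one
  set δ := π ⬝ᵥ eventProb ζ P
  set τ := π ⬝ᵥ u with hτdef
  set C := (L / a + 1) * (Fintype.card X / a)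
  have hC : 0 ≤ C := by have := hc.pos; positivity
  have hsqrt : 0 < √δ := Real.sqrt_pos.2 hδ
  have hδsqrt : δ ≤ √δ := Real.le_sqrt_of_sq_le (by nlinarith)
  rcases le_or_gt (δ + τ) √δ with hsmall | hlarge
  · exact (hclose hu).trans (by nlinarith [mul_le_mul_of_nonneg_left hsmall hC])
  · have hτ : 0 < τ := by linarith
    set c := (√δ - δ) / τ
    have hc0 : 0 ≤ c := div_nonneg (sub_nonneg.2 hδsqrt) hτ.le
    have hc1 : c ≤ 1 := (div_le_one hτ).2 (by linarith)
    have hcu : 0 ≤ c • u := smul_nonneg hc0 hu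
    have hcτ : δ + π ⬝ᵥ (c • u) = √δ := by
      rw [dotProduct_smul, ← hτdef, smul_eq_mul, div_mul_cancel₀ _ hτ.ne', add_sub_cancel]
    have hshrunk := hclose hcu
    rw [hcτ, Real.div_sqrt, abs_le] at hshrunk
    have hmono := h.integral_exp_neg_reward_anti hcu (smul_le_of_le_one_left hu hc1) i
    have hE : 0 ≤ ∫ ω, Real.exp (-reward η u (firstEvent ζ ω) ω) ∂P i :=
      integral_nonneg fun ω => (Real.exp_pos _).le
    have hratio : δ / (δ + τ) ≤ √δ := by
      calc δ / (δ + τ) ≤ δ / √δ := div_le_div_of_nonneg_left hδ.le hsqrt hlarge.le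
        _ = √δ := Real.div_sqrt
    have hratio0 : 0 ≤ δ / (δ + τ) := by positivity
    rw [abs_le]
    constructor <;> linarith [hshrunk.2, mul_nonneg hC hsqrt.le]

lemma one_div_exitRate_le (h : IsMarkovRenewal η ζ P R) (hc : IsUniformChain (embedded R) π L a)
    (hu : 0 ≤ u) (hτ : 0 < π ⬝ᵥ u) :
    0 < exitRate π (taboo R (discount u)) ∧
      1 / exitRate π (taboo R (discount u)) ≤ 1 / π ⬝ᵥ u + Fintype.card X / a := by
  set γ := Fintype.card X / a * π ⬝ᵥ u
  have hγ : 0 ≤ γ := mul_nonneg (div_nonneg (Nat.cast_nonneg _) hc.pos.le) hτ.le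
  have hlower : π ⬝ᵥ u / (1 + γ) ≤ exitRate π (taboo R (discount u)) := calc
    π ⬝ᵥ u / (1 + γ) = π ⬝ᵥ ((1 + γ)⁻¹ • u) := by
      rw [dotProduct_smul, smul_eq_mul, inv_mul_eq_div]
    _ ≤ π ⬝ᵥ (1 - discount u) := dotProduct_le_dotProduct_of_nonneg_left (fun i => by
      refine le_trans ?_ (div_one_add_le_one_sub_discount hu i)
      have hui : 0 ≤ u i := hu i
      rw [Pi.smul_apply, smul_eq_mul, inv_mul_eq_div]
      gcongr
      exact hc.apply_le_mul_dotProduct hu i) hc.nonneg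
    _ ≤ exitRate π (taboo R (discount u)) := by
      rw [h.exitRate_taboo]
      exact le_add_of_nonneg_left (dotProduct_nonneg_of_nonneg hc.nonneg
        (mul_nonneg (discount_nonneg u) eventProb_nonneg))
  have hpos : 0 < π ⬝ᵥ u / (1 + γ) := by positivity
  refine ⟨hpos.trans_le hlower, (one_div_le_one_div_of_le hpos hlower).trans_eq ?_⟩
  rw [one_div_div, add_div, mul_div_cancel_right₀ _ hτ.ne']

lemma measureReal_noEvent_inter_reward_le (h : IsMarkovRenewal η ζ P R) (hu : 0 ≤ u) (n : ℕ)
    (x : ℝ) (i : X) :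
    (P i).real (noEvent ζ n ∩ {ω | reward η u n ω ≤ x})
      ≤ Real.exp x * (taboo R (discount u) ^ n *ᵥ 1) i := by
  have hset : noEvent ζ n ∩ {ω | reward η u n ω ≤ x}
      = {ω | Real.exp (-x) ≤ Real.exp (-reward η u n ω)} ∩ noEvent ζ n := by
    ext ω
    simp [and_comm]
  have hmarkov := mul_meas_ge_le_integral_of_nonneg (μ := (P i).restrict (noEvent ζ n))
    (Eventually.of_forall fun ω => (Real.exp_pos (-reward η u n ω)).le)
    (h.integrable_exp_neg_reward hu n i).restrict (Real.exp (-x))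
  rw [measureReal_restrict_apply' (measurableSet_noEvent h.measurable_mark n),
    h.setIntegral_exp_neg_reward, ← hset, Real.exp_neg] at hmarkov
  rwa [← inv_mul_le_iff₀ (Real.exp_pos x)]

lemma mul_measureReal_noEvent_inter_reward_le (h : IsMarkovRenewal η ζ P R)
    (hc : IsUniformChain (embedded R) π L a) (hu : 0 ≤ u) (hτ : 0 < π ⬝ᵥ u) (n : ℕ) (x : ℝ)
    (i : X) :
    n * (P i).real (noEvent ζ n ∩ {ω | reward η u n ω ≤ x})
      ≤ Real.exp x * (1 / π ⬝ᵥ u + Fintype.card X / a + L / a) := by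
  obtain ⟨hD, hD'⟩ := h.one_div_exitRate_le hc hu hτ
  calc n * (P i).real (noEvent ζ n ∩ {ω | reward η u n ω ≤ x})
      ≤ n * (Real.exp x * (taboo R (discount u) ^ n *ᵥ 1) i) := by
        gcongr
        exact h.measureReal_noEvent_inter_reward_le hu n x i
    _ = Real.exp x * (n * (taboo R (discount u) ^ n *ᵥ 1) i) := mul_left_comm _ _ _
    _ ≤ Real.exp x * (1 / exitRate π (taboo R (discount u)) + L / a) := by
        gcongr
        exact hc.mul_pow_mulVec_one_le (h.taboo_nonneg (discount_nonneg u))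
          (h.taboo_le_embedded (discount_le_one hu)) hD n i
    _ ≤ Real.exp x * (1 / π ⬝ᵥ u + Fintype.card X / a + L / a) := by gcongr

lemma measureReal_compl_noEvent_le (h : IsMarkovRenewal η ζ P R)
    (hc : IsUniformChain (embedded R) π L a) (n : ℕ) (i : X) :
    (P i).real (noEvent ζ n)ᶜ ≤ n * (Fintype.card X / a * π ⬝ᵥ eventProb ζ P) := by
  have := h.isProbabilityMeasure i
  rw [probReal_compl_eq_one_sub (measurableSet_noEvent h.measurable_mark n), h.measureReal_noEvent]
  refine one_sub_pow_mulVec_one_le (h.taboo_nonneg zero_le_one)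
    (hc.mulVec_one_le_one (h.taboo_le_embedded le_rfl)) (fun j => ?_) n i
  rw [h.taboo_mulVec_one, one_mul, sub_sub_cancel]
  exact hc.apply_le_mul_dotProduct eventProb_nonneg j

lemma firstEvent_ne_zero_ae (h : IsMarkovRenewal η ζ P R)
    (hc : IsUniformChain (embedded R) π L a) (hδ : 0 < π ⬝ᵥ eventProb ζ P) (i : X) :
    ∀ᵐ ω ∂P i, firstEvent ζ ω ≠ 0 := by
  have := h.isProbabilityMeasure i
  refine ae_iff.2 ((measureReal_eq_zero_iff).1 (le_antisymm ?_ measureReal_nonneg))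
  refine ge_of_tendsto' (h.tendsto_measureReal_noEvent hc hδ i) fun n => measureReal_mono ?_
  intro ω hω
  exact mem_noEvent_iff.2 (Or.inl (not_not.1 hω))

lemma measureReal_compl_noEvent_add_ceil_le (h : IsMarkovRenewal η ζ P R)
    (hc : IsUniformChain (embedded R) π L a) {t : ℝ} (ht : 0 < t) (n : ℕ) (i : X) :
    (P i).real (noEvent ζ (n + ⌈n / t⌉₊))ᶜ
      ≤ Fintype.card X / a * ((1 + 1 / t) * (n * π ⬝ᵥ eventProb ζ P) + π ⬝ᵥ eventProb ζ P) := by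
  have hδ : 0 ≤ π ⬝ᵥ eventProb ζ P := dotProduct_nonneg_of_nonneg hc.nonneg eventProb_nonneg
  have ha := hc.pos
  have hceil : (⌈n / t⌉₊ : ℝ) ≤ n / t + 1 := (Nat.ceil_lt_add_one (by positivity)).le
  calc (P i).real (noEvent ζ (n + ⌈n / t⌉₊))ᶜ
      ≤ (n + ⌈n / t⌉₊ : ℕ) * (Fintype.card X / a * π ⬝ᵥ eventProb ζ P) :=
        h.measureReal_compl_noEvent_le hc _ i
    _ ≤ (n + (n / t + 1)) * (Fintype.card X / a * π ⬝ᵥ eventProb ζ P) := by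
        push_cast
        gcongr
    _ = _ := by ring

/- If no event occurs up to the time `n + n / t`, then `n ≤ t * firstEvent ζ ω`, so that the reward
at hand is at least that of the first `n` steps, none of which has an event. -/
lemma measureReal_reward_floor_le (h : IsMarkovRenewal η ζ P R)
    (hc : IsUniformChain (embedded R) π L a) (hδ : 0 < π ⬝ᵥ eventProb ζ P) (hu : 0 ≤ u) {t : ℝ}
    (ht : 0 < t) (n : ℕ) (x : ℝ) (i : X) :
    (P i).real {ω | reward η u ⌊t * firstEvent ζ ω⌋₊ ω ≤ x}
      ≤ (P i).real (noEvent ζ (n + ⌈n / t⌉₊))ᶜ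
        + (P i).real (noEvent ζ n ∩ {ω | reward η u n ω ≤ x}) := by
  have := h.isProbabilityMeasure i
  refine le_trans ?_ (measureReal_union_le _ _)
  refine ENNReal.toReal_mono (measure_ne_top _ _) (measure_mono_ae ?_)
  filter_upwards [h.firstEvent_ne_zero_ae hc hδ i] with ω hω hx
  refine or_iff_not_imp_left.2 fun hmem => ?_
  rw [mem_compl_iff, not_not] at hmem
  refine ⟨noEvent_antitone (Nat.le_add_right _ _) hmem, le_trans (reward_mono hu ω ?_) hx⟩
  have hlt : n + ⌈n / t⌉₊ < firstEvent ζ ω := (mem_noEvent_iff.1 hmem).resolve_left hω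
  refine Nat.le_floor ?_
  rw [← div_le_iff₀' ht]
  exact (Nat.le_ceil _).trans (Nat.cast_le.2 ((Nat.le_add_left _ _).trans hlt.le))

lemma measureReal_reward_floor_le_sqrt (h : IsMarkovRenewal η ζ P R)
    (hc : IsUniformChain (embedded R) π L a) (hδ : 0 < π ⬝ᵥ eventProb ζ P) (hu : 0 ≤ u)
    (hτ : 0 < π ⬝ᵥ u) {t : ℝ} (ht : 0 < t) (x : ℝ) (i : X) :
    (P i).real {ω | reward η u ⌊t * firstEvent ζ ω⌋₊ ω ≤ x}
      ≤ (Fintype.card X / a * (3 + 2 / t) + Real.exp x * (1 + Fintype.card X / a + L / a))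
        * √(π ⬝ᵥ eventProb ζ P + π ⬝ᵥ eventProb ζ P / π ⬝ᵥ u) := by
  have hδ1 := hc.dotProduct_le_one h.eventProb_le_one
  have hevent := h.measureReal_compl_noEvent_add_ceil_le hc ht (i := i)
  have hsmall := h.mul_measureReal_noEvent_inter_reward_le hc hu hτ (x := x) (i := i)
  refine (h.measureReal_reward_floor_le hc hδ hu ht
    ⌈√(π ⬝ᵥ eventProb ζ P + π ⬝ᵥ eventProb ζ P / π ⬝ᵥ u) / π ⬝ᵥ eventProb ζ P⌉₊ x i).trans ?_
  set δ := π ⬝ᵥ eventProb ζ P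
  set τ := π ⬝ᵥ u
  set c := Fintype.card X / a
  set A := √(δ + δ / τ)
  set n := ⌈A / δ⌉₊
  have ha := hc.pos
  have hA : 0 < A := Real.sqrt_pos.2 (by positivity)
  have hA2 : A ^ 2 = δ + δ / τ := Real.sq_sqrt (by positivity)
  have hδA : δ ≤ A := Real.le_sqrt_of_sq_le
    ((pow_le_of_le_one hδ.le hδ1 two_ne_zero).trans (le_add_of_nonneg_right (by positivity)))
  have hnδ : n * δ ≤ 2 * A := calc
    n * δ ≤ (A / δ + 1) * δ := by
      gcongr
      exact (Nat.ceil_lt_add_one (by positivity)).le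
    _ = A + δ := by rw [add_mul, div_mul_cancel₀ _ hδ.ne', one_mul]
    _ ≤ 2 * A := by linarith
  rw [add_mul]
  refine add_le_add ((hevent _).trans ?_) ((mul_le_mul_iff_right₀ (div_pos hA hδ)).1 ?_)
  · calc c * ((1 + 1 / t) * (n * δ) + δ) ≤ c * ((1 + 1 / t) * (2 * A) + A) := by gcongr
      _ = c * (3 + 2 / t) * A := by ring
  · calc A / δ * (P i).real (noEvent ζ n ∩ {ω | reward η u n ω ≤ x})
        ≤ n * (P i).real (noEvent ζ n ∩ {ω | reward η u n ω ≤ x}) := by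
          gcongr
          exact Nat.le_ceil _
      _ ≤ Real.exp x * (1 / τ + c + L / a) := hsmall n
      _ ≤ Real.exp x * ((1 + c + L / a) * (1 + 1 / τ)) := by
          gcongr
          have : 0 ≤ (c + L / a) * (1 / τ) := by positivity
          linarith
      _ = Real.exp x * (1 + c + L / a) * (A ^ 2 / δ) := by rw [hA2]; field_simp
      _ = A / δ * (Real.exp x * (1 + c + L / a) * A) := by ring

end IsMarkovRenewal

end MarkovRenewal

section UniformEdge

variable {ι X : Type*} {l : Filter ι}

/-- The transition from `i` to `j` has a probability bounded away from `0` along the filter `l`. -/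
def IsUniformEdge (l : Filter ι) (p : ι → X → X → ℝ) (i j : X) : Prop :=
  ∃ b > 0, ∀ᶠ ε in l, b ≤ p ε i j

lemma IsUniformEdge.congr {p p' : ι → X → X → ℝ} {i j : X} (h : IsUniformEdge l p i j)
    (hp : ∀ᶠ ε in l, ∀ i j, p ε i j = p' ε i j) : IsUniformEdge l p' i j := by
  obtain ⟨b, hb, hle⟩ := h
  refine ⟨b, hb, ?_⟩
  filter_upwards [hle, hp] with ε hε heq
  exact heq i j ▸ hε

lemma isUniformEdge_of_liminf_pos {p : ι → X → X → ℝ} {i j : X}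
    (h : 0 < liminf (fun ε => p ε i j) l) : IsUniformEdge l p i j := by
  rw [liminf_eq] at h
  have hne : {b | ∀ᶠ ε in l, b ≤ p ε i j}.Nonempty := by
    rw [Set.nonempty_iff_ne_empty]
    intro hempty
    rw [hempty, Real.sSup_empty] at h
    exact h.false
  obtain ⟨b, hle, hb⟩ := exists_lt_of_lt_csSup hne h
  exact ⟨b, hb, hle⟩

lemma CondB.reflTransGen_isUniformEdge {m : ℕ} {p : ℝ → Fin m → Fin m → ℝ} (hB : CondB p)
    (i j : Fin m) : Relation.ReflTransGen (IsUniformEdge (𝓝[>] 0) p) i j := by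
  obtain ⟨N, -, c, hring, hcover, hlim⟩ := hB
  have hpath {k k' : ℕ} (hkk' : k ≤ k') (hk' : k' ≤ N) :
      Relation.ReflTransGen (IsUniformEdge (𝓝[>] 0) p) (c k) (c k') := by
    induction k', hkk' using Nat.le_induction with
    | base => exact .refl
    | succ k' _ ih => exact (ih (by omega)).tail (isUniformEdge_of_liminf_pos (hlim k' (by omega)))
  obtain ⟨k, hk, rfl⟩ := hcover i
  obtain ⟨k', hk', rfl⟩ := hcover j
  exact (hpath hk le_rfl).trans (hring ▸ hpath k'.zero_le hk')

variable [Fintype X] [DecidableEq X] {p : ι → Matrix X X ℝ}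

lemma exists_le_pow_of_reflTransGen (hp : ∀ᶠ ε in l, ∀ i j, 0 ≤ p ε i j) {i j : X}
    (h : Relation.ReflTransGen (IsUniformEdge l p) i j) :
    ∃ n : ℕ, ∃ a > 0, ∀ᶠ ε in l, a ≤ (p ε ^ n) i j := by
  induction h with
  | refl => exact ⟨0, 1, one_pos, by simp⟩
  | @tail j k _ hedge ih =>
    obtain ⟨n, a, ha, hn⟩ := ih
    obtain ⟨b, hb, hjk⟩ := hedge
    refine ⟨n + 1, a * b, mul_pos ha hb, ?_⟩
    filter_upwards [hp, hn, hjk] with ε hε hn hjk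
    rw [pow_succ, Matrix.mul_apply]
    calc a * b ≤ (p ε ^ n) i j * p ε j k := mul_le_mul hn hjk hb.le (ha.le.trans hn)
      _ ≤ ∑ x, (p ε ^ n) i x * p ε x k :=
        Finset.single_le_sum (f := fun x => (p ε ^ n) i x * p ε x k)
          (fun x _ => mul_nonneg (Matrix.pow_apply_nonneg hε n i x) (hε x k)) (Finset.mem_univ j)

lemma exists_forall_exists_le_pow (hp : ∀ᶠ ε in l, ∀ i j, 0 ≤ p ε i j)
    (hreach : ∀ i j, Relation.ReflTransGen (IsUniformEdge l p) i j) :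
    ∃ L : ℕ, ∃ a > 0, ∀ᶠ ε in l, ∀ i j, ∃ n ≤ L, a ≤ (p ε ^ n) i j := by
  choose n b hb hle using fun x : X × X => exists_le_pow_of_reflTransGen hp (hreach x.1 x.2)
  obtain ⟨L, hL⟩ := (eventually_all.2 fun x => eventually_ge_atTop (n x)).exists
  obtain ⟨a, ha, hab⟩ : ∃ a > 0, ∀ x, a ∈ Ioc 0 (b x) :=
    (eventually_mem_nhdsWithin.and (eventually_all.2 fun x => Ioc_mem_nhdsGT (hb x))).exists
  refine ⟨L, a, ha, ?_⟩
  filter_upwards [eventually_all.2 hle] with ε hε i j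
  exact ⟨n (i, j), hL (i, j), (hab (i, j)).2.trans (hε (i, j))⟩

end UniformEdge

section ExponentialLaplaceTransform

variable {ι : Type*} {l : Filter ι} {φ : ι → ℝ}

lemma one_div_one_add_mul_eq_toReal {s x : ℝ} (hs : 0 ≤ s) (hx : 0 ≤ x) :
    1 / (1 + s * x) = ((1 + ENNReal.ofReal s * ENNReal.ofReal x)⁻¹).toReal := by
  rw [← ENNReal.ofReal_mul hs, ENNReal.toReal_inv, ← ENNReal.ofReal_one,
    ← ENNReal.ofReal_add one_pos.le (mul_nonneg hs hx), ENNReal.toReal_ofReal (by positivity),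
    one_div]

lemma tendsto_one_div_one_add_mul {s : ℝ} (hs : 0 ≤ s) (hφ : ∀ᶠ ε in l, 0 ≤ φ ε) {f₀ : ℝ≥0∞}
    (h : Tendsto (fun ε => ENNReal.ofReal (φ ε)) l (𝓝 f₀)) :
    Tendsto (fun ε => 1 / (1 + s * φ ε)) l (𝓝 ((1 + ENNReal.ofReal s * f₀)⁻¹).toReal) := by
  have hinv : (1 + ENNReal.ofReal s * f₀)⁻¹ ≠ ∞ := by simp
  refine ((ENNReal.tendsto_toReal hinv).comp (tendsto_inv_iff.2
    ((ENNReal.Tendsto.const_mul h (Or.inr ENNReal.ofReal_ne_top)).const_add 1))).congr' ?_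
  filter_upwards [hφ] with ε hε using (one_div_one_add_mul_eq_toReal hs hε).symm

lemma exists_tendsto_ofReal_of_tendsto_one_div (hφ : ∀ᶠ ε in l, 0 ≤ φ ε) {y : ℝ}
    (h : Tendsto (fun ε => 1 / (1 + φ ε)) l (𝓝 y)) :
    ∃ f₀ : ℝ≥0∞, Tendsto (fun ε => ENNReal.ofReal (φ ε)) l (𝓝 f₀) := by
  refine ⟨(ENNReal.ofReal y)⁻¹ - 1, Tendsto.congr' ?_ (ENNReal.Tendsto.sub
    (tendsto_inv_iff.2 (ENNReal.tendsto_ofReal h)) tendsto_const_nhds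
      (Or.inr ENNReal.one_ne_top))⟩
  filter_upwards [hφ] with ε hε
  rw [← ENNReal.ofReal_inv_of_pos (by positivity), one_div, inv_inv,
    ENNReal.ofReal_add one_pos.le hε, ENNReal.ofReal_one,
    ENNReal.add_sub_cancel_left ENNReal.one_ne_top]

end ExponentialLaplaceTransform

section InitialDistribution

variable {X Ω : Type*} [Fintype X] [MeasurableSpace Ω] {P : X → Measure Ω} {Q : Measure Ω}

/-- `Q` is the law of the process with the laws `P i` given the initial state `i`, for some
distribution of the initial state. -/
def IsMixture (P : X → Measure Ω) (Q : Measure Ω) : Prop :=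
  ∃ q ∈ stdSimplex ℝ X, Q = ∑ i, ENNReal.ofReal (q i) • P i

namespace IsMixture

lemma abs_integral_sub_le (h : IsMixture P Q) {g : Ω → ℝ} (hg : ∀ i, Integrable g (P i)) {y b : ℝ}
    (hb : ∀ i, |∫ ω, g ω ∂P i - y| ≤ b) : |∫ ω, g ω ∂Q - y| ≤ b := by
  obtain ⟨q, ⟨hq, hsum⟩, rfl⟩ := h
  rw [integral_finsetSum_measure fun i _ => (hg i).smul_measure ENNReal.ofReal_ne_top]
  simp only [integral_smul_measure, ENNReal.toReal_ofReal (hq _)]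
  exact (convex_closedBall y b).sum_mem (fun i _ => hq i) hsum fun i _ => hb i

lemma measureReal_le (h : IsMixture P Q) (hP : ∀ i, IsProbabilityMeasure (P i)) {S : Set Ω} {b : ℝ}
    (hb : ∀ i, (P i).real S ≤ b) : Q.real S ≤ b := by
  obtain ⟨q, ⟨hq, hsum⟩, rfl⟩ := h
  have hmix : (∑ i, ENNReal.ofReal (q i) • P i).real S = ∑ i, q i • (P i).real S := by
    simp only [Measure.real, Measure.finsetSum_apply, Measure.smul_apply, smul_eq_mul]
    rw [ENNReal.toReal_sum fun i _ =>
      ENNReal.mul_ne_top ENNReal.ofReal_ne_top (measure_ne_top _ _)]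
    simp only [ENNReal.toReal_mul, ENNReal.toReal_ofReal (hq _)]
  rw [hmix]
  exact (convex_Iic b).sum_mem (fun i _ => hq i) hsum fun i _ => hb i

end IsMixture

end InitialDistribution

section RareEvent

open scoped Matrix

variable {ι X Ω : Type*} [MeasurableSpace Ω] {l : Filter ι} {η : ι → ℕ → Ω → X}
  {ζ : ι → ℕ → Ω → Bool} {P : ι → X → Measure Ω} {R : ι → X → X → Bool → ℝ} {π : ι → X → ℝ}

lemma eventually_isMarkovRenewal [Finite X] [MeasurableSpace X]
    (hP : ∀ ε i, IsProbabilityMeasure (P ε i))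
    (hη : ∀ ε n, Measurable (η ε n)) (hζ : ∀ ε n, Measurable (ζ ε n))
    (hlaw : ∀ᶠ ε in l, ∀ n I Z, P ε (I 0) (pathCylinder (η ε) (ζ ε) n I Z)
      = ENNReal.ofReal (pathWeight (R ε) n I Z))
    (hreach : ∀ i j, Relation.ReflTransGen (IsUniformEdge l fun ε => embedded (R ε)) i j) :
    ∀ᶠ ε in l, IsMarkovRenewal (η ε) (ζ ε) (P ε) (R ε) := by
  have hedge : ∀ᶠ ε in l, ∀ i j, IsUniformEdge l (fun ε => embedded (R ε)) i j →
      ∃ z, 0 < R ε i j z := by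
    simp only [eventually_all]
    rintro i j ⟨b, hb, hle⟩
    filter_upwards [hle] with ε hε
    by_contra! hneg
    exact absurd (hb.trans_le hε) (add_nonpos (hneg false) (hneg true)).not_gt
  filter_upwards [hlaw, hedge] with ε hlaw hedge
  exact ⟨hP ε, hη ε, hζ ε, nonneg_of_measure_pathCylinder hlaw fun i j =>
    Relation.ReflTransGen.mono hedge i j (hreach i j), hlaw⟩

variable [Fintype X]

lemma tendsto_dotProduct_of_mem_stdSimplex {θ : ι → X → ℝ} (hπ : ∀ᶠ ε in l, π ε ∈ stdSimplex ℝ X)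
    (hθ : ∀ i, Tendsto (fun ε => θ ε i) l (𝓝 0)) :
    Tendsto (fun ε => π ε ⬝ᵥ θ ε) l (𝓝 0) := by
  have hterm (i : X) : Tendsto (fun ε => π ε i * θ ε i) l (𝓝 0) := by
    refine isBoundedUnder_le_mul_tendsto_zero (isBoundedUnder_of_eventually_le (a := 1) ?_) (hθ i)
    filter_upwards [hπ] with ε hε
    have hmem : π ε i ∈ Icc 0 1 := mem_Icc_of_mem_stdSimplex hε i
    exact (abs_of_nonneg hmem.1).trans_le hmem.2
  simpa [dotProduct] using tendsto_finsetSum _ fun i _ => hterm i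

/-- The reward expected up to the first event if the number of steps had the mean
`1 / (π ⬝ᵥ eventProb ζ P)` and each step the stationary mean `π ⬝ᵥ u` (`0` if no event occurs). -/
def meanReward (ζ : ℕ → Ω → Bool) (P : X → Measure Ω) (π u : X → ℝ) : ℝ :=
  (π ⬝ᵥ eventProb ζ P)⁻¹ * π ⬝ᵥ u

variable [DecidableEq X] [MeasurableSpace X]

/-- A family of Markov renewal processes whose embedded chains are uniformly irreducible and whose
events become rare along the filter `l`, without being impossible. -/
structure IsRareEventFamily (l : Filter ι) (η : ι → ℕ → Ω → X) (ζ : ι → ℕ → Ω → Bool)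
    (P : ι → X → Measure Ω) (R : ι → X → X → Bool → ℝ) (π : ι → X → ℝ) (L : ℕ) (a : ℝ) :
    Prop where
  isMarkovRenewal : ∀ᶠ ε in l, IsMarkovRenewal (η ε) (ζ ε) (P ε) (R ε)
  isUniformChain : ∀ᶠ ε in l, IsUniformChain (embedded (R ε)) (π ε) L a
  eventProb_pos : ∀ᶠ ε in l, 0 < π ε ⬝ᵥ eventProb (ζ ε) (P ε)
  tendsto_eventProb : Tendsto (fun ε => π ε ⬝ᵥ eventProb (ζ ε) (P ε)) l (𝓝 0)

variable {u : ι → X → ℝ} {L : ℕ} {a : ℝ} {Q : ι → Measure Ω}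

namespace IsRareEventFamily

variable [MeasurableSingletonClass X]

lemma tendsto_integral_sub (h : IsRareEventFamily l η ζ P R π L a)
    (hQ : ∀ᶠ ε in l, IsMixture (P ε) (Q ε)) (hu : ∀ᶠ ε in l, 0 ≤ u ε) :
    Tendsto (fun ε => ∫ ω, Real.exp (-reward (η ε) (u ε) (firstEvent (ζ ε) ω) ω) ∂Q ε
      - 1 / (1 + meanReward (ζ ε) (P ε) (π ε) (u ε))) l (𝓝 0) := by
  have hlim : Tendsto (fun ε => ((L / a + 1) * (Fintype.card X / a) + 1)
      * √(π ε ⬝ᵥ eventProb (ζ ε) (P ε))) l (𝓝 0) := by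
    simpa using h.tendsto_eventProb.sqrt.const_mul ((L / a + 1) * (Fintype.card X / a) + 1)
  refine squeeze_zero_norm' ?_ hlim
  filter_upwards [h.isMarkovRenewal, h.isUniformChain, h.eventProb_pos, hQ, hu]
    with ε hren hc hδ hQ hu
  have hratio : 1 / (1 + meanReward (ζ ε) (P ε) (π ε) (u ε)) = π ε ⬝ᵥ eventProb (ζ ε) (P ε)
      / (π ε ⬝ᵥ eventProb (ζ ε) (P ε) + π ε ⬝ᵥ u ε) := by
    rw [meanReward]
    field_simp
  rw [Real.norm_eq_abs, hratio]
  exact hQ.abs_integral_sub_le (hren.integrable_exp_neg_reward_firstEvent hu)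
    (hren.abs_integral_exp_sub_le_sqrt hc hδ hu)

lemma tendsto_integral_exp_mul (h : IsRareEventFamily l η ζ P R π L a)
    (hQ : ∀ᶠ ε in l, IsMixture (P ε) (Q ε)) (hu : ∀ᶠ ε in l, 0 ≤ u ε) {c : ι → ℝ}
    (hc : ∀ᶠ ε in l, 0 ≤ c ε) {y : ℝ}
    (hlim : Tendsto (fun ε => 1 / (1 + c ε * meanReward (ζ ε) (P ε) (π ε) (u ε))) l (𝓝 y)) :
    Tendsto (fun ε => ∫ ω, Real.exp (-(c ε * reward (η ε) (u ε) (firstEvent (ζ ε) ω) ω)) ∂Q ε) l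
      (𝓝 y) := by
  have hcu : ∀ᶠ ε in l, 0 ≤ c ε • u ε := by
    filter_upwards [hc, hu] with ε hc hu using smul_nonneg hc hu
  simpa [meanReward, mul_left_comm, reward, Finset.mul_sum] using
    (h.tendsto_integral_sub hQ hcu).add hlim

theorem tendsto_integral_exp_inv_meanReward_mul (h : IsRareEventFamily l η ζ P R π L a)
    (hQ : ∀ᶠ ε in l, IsMixture (P ε) (Q ε)) (hu : ∀ᶠ ε in l, 0 ≤ u ε)
    (hpos : ∀ᶠ ε in l, 0 < meanReward (ζ ε) (P ε) (π ε) (u ε)) {s : ℝ} (hs : 0 ≤ s) :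
    Tendsto (fun ε => ∫ ω, Real.exp (-(s * (meanReward (ζ ε) (P ε) (π ε) (u ε))⁻¹
      * reward (η ε) (u ε) (firstEvent (ζ ε) ω) ω)) ∂Q ε) l (𝓝 (1 / (1 + s))) := by
  refine h.tendsto_integral_exp_mul hQ hu ?_ (tendsto_const_nhds.congr' ?_)
  · filter_upwards [hpos] with ε hε using mul_nonneg hs (inv_nonneg.2 hε.le)
  · filter_upwards [hpos] with ε hε
    rw [inv_mul_cancel_right₀ hε.ne']

theorem tendsto_integral_exp_of_tendsto_meanReward (h : IsRareEventFamily l η ζ P R π L a)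
    (hQ : ∀ᶠ ε in l, IsMixture (P ε) (Q ε)) (hu : ∀ᶠ ε in l, 0 ≤ u ε)
    (hpos : ∀ᶠ ε in l, 0 ≤ meanReward (ζ ε) (P ε) (π ε) (u ε)) {f₀ : ℝ≥0∞}
    (hf₀ : Tendsto (fun ε => ENNReal.ofReal (meanReward (ζ ε) (P ε) (π ε) (u ε))) l (𝓝 f₀))
    {s : ℝ} (hs : 0 ≤ s) :
    Tendsto (fun ε => ∫ ω, Real.exp (-(s * reward (η ε) (u ε) (firstEvent (ζ ε) ω) ω)) ∂Q ε) l
      (𝓝 ((1 + ENNReal.ofReal s * f₀)⁻¹).toReal) :=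
  h.tendsto_integral_exp_mul hQ hu (Eventually.of_forall fun _ => hs)
    (tendsto_one_div_one_add_mul hs hpos hf₀)

theorem exists_tendsto_meanReward_of_tendsto_integral_exp (h : IsRareEventFamily l η ζ P R π L a)
    (hQ : ∀ᶠ ε in l, IsMixture (P ε) (Q ε)) (hu : ∀ᶠ ε in l, 0 ≤ u ε)
    (hpos : ∀ᶠ ε in l, 0 ≤ meanReward (ζ ε) (P ε) (π ε) (u ε)) {y : ℝ}
    (hy : Tendsto (fun ε => ∫ ω, Real.exp (-reward (η ε) (u ε) (firstEvent (ζ ε) ω) ω) ∂Q ε) l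
      (𝓝 y)) :
    ∃ f₀ : ℝ≥0∞,
      Tendsto (fun ε => ENNReal.ofReal (meanReward (ζ ε) (P ε) (π ε) (u ε))) l (𝓝 f₀) :=
  exists_tendsto_ofReal_of_tendsto_one_div hpos
    (by simpa using hy.sub (h.tendsto_integral_sub hQ hu))

theorem tendsto_measureReal_reward_floor (h : IsRareEventFamily l η ζ P R π L a)
    (hQ : ∀ᶠ ε in l, IsMixture (P ε) (Q ε)) (hu : ∀ᶠ ε in l, 0 ≤ u ε)
    (hf₀ : Tendsto (fun ε => meanReward (ζ ε) (P ε) (π ε) (u ε)) l atTop) {t : ℝ} (ht : 0 < t)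
    (x : ℝ) :
    Tendsto (fun ε => (Q ε).real {ω | reward (η ε) (u ε) ⌊t * firstEvent (ζ ε) ω⌋₊ ω ≤ x}) l
      (𝓝 0) := by
  have hδτ : Tendsto (fun ε => √(π ε ⬝ᵥ eventProb (ζ ε) (P ε)
      + π ε ⬝ᵥ eventProb (ζ ε) (P ε) / π ε ⬝ᵥ u ε)) l (𝓝 0) := by
    simpa [meanReward, div_eq_mul_inv, mul_comm] using
      (h.tendsto_eventProb.add hf₀.inv_tendsto_atTop).sqrt
  have hlim : Tendsto (fun ε => (Fintype.card X / a * (3 + 2 / t)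
      + Real.exp x * (1 + Fintype.card X / a + L / a)) * √(π ε ⬝ᵥ eventProb (ζ ε) (P ε)
      + π ε ⬝ᵥ eventProb (ζ ε) (P ε) / π ε ⬝ᵥ u ε)) l (𝓝 0) := by
    simpa only [mul_zero] using hδτ.const_mul (Fintype.card X / a * (3 + 2 / t)
      + Real.exp x * (1 + Fintype.card X / a + L / a))
  refine squeeze_zero' (Eventually.of_forall fun _ => measureReal_nonneg) ?_ hlim
  filter_upwards [h.isMarkovRenewal, h.isUniformChain, h.eventProb_pos, hQ, hu,
    hf₀.eventually_gt_atTop 0] with ε hren hc hδ hQ hu hf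
  exact hQ.measureReal_le hren.isProbabilityMeasure
    (hren.measureReal_reward_floor_le_sqrt hc hδ hu (pos_of_mul_pos_right hf (inv_pos.2 hδ).le)
      ht x)

end IsRareEventFamily

lemma exists_isRareEventFamily [MeasurableSingletonClass X]
    (hren : ∀ᶠ ε in l, IsMarkovRenewal (η ε) (ζ ε) (P ε) (R ε))
    (hreach : ∀ i j, Relation.ReflTransGen (IsUniformEdge l fun ε => embedded (R ε)) i j)
    (hπ : ∀ᶠ ε in l, π ε ∈ stdSimplex ℝ X ∧ π ε ᵥ* embedded (R ε) = π ε)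
    (hpos : ∀ᶠ ε in l, ∃ i, 0 < eventProb (ζ ε) (P ε) i)
    (hrare : ∀ i, Tendsto (fun ε => eventProb (ζ ε) (P ε) i) l (𝓝 0)) :
    ∃ L a, IsRareEventFamily l η ζ P R π L a := by
  obtain ⟨L, a, ha, hpow⟩ := exists_forall_exists_le_pow
    (hren.mono fun ε hε i j => (Matrix.mem_rowStochastic.1 hε.embedded_mem_rowStochastic).1 i j)
    hreach
  have hchain : ∀ᶠ ε in l, IsUniformChain (embedded (R ε)) (π ε) L a := by
    filter_upwards [hren, hpow, hπ] with ε hren hpow hπ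
    exact ⟨hren.embedded_mem_rowStochastic, ha, hpow, hπ.1.1, hπ.1.2, hπ.2⟩
  refine ⟨L, a, hren, hchain, ?_,
    tendsto_dotProduct_of_mem_stdSimplex (hπ.mono fun ε hε => hε.1) hrare⟩
  filter_upwards [hchain, hpos] with ε hc ⟨i, hi⟩
  have : Nonempty X := ⟨i⟩
  have hπi : 0 < π ε i := (div_pos ha (Nat.cast_pos.2 Fintype.card_pos)).trans_le (hc.div_card_le i)
  exact (mul_pos hπi hi).trans_le (Finset.single_le_sum
    (f := fun i => π ε i * eventProb (ζ ε) (P ε) i)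
    (fun j _ => mul_nonneg (hc.nonneg j) (eventProb_nonneg j)) (Finset.mem_univ i))

end RareEvent

section FinStates

variable {m : ℕ} {Ω : Type}

lemma nuProc_eq_reward (η : ℝ → ℕ → Ω → Fin m) (ζ : ℝ → ℕ → Ω → Bool) (f : ℝ → Fin m → ℝ)
    (ε t : ℝ) (ω : Ω) :
    nuProc η ζ f ε t ω = reward (η ε) (f ε) ⌊t * firstEvent (ζ ε) ω⌋₊ ω := by
  rw [nuProc, ← Finset.Ico_add_one_right_eq_Icc, Finset.sum_Ico_eq_sum_range]
  simp only [add_tsub_cancel_right, add_tsub_cancel_left]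
  rfl

lemma nuProc_one (η : ℝ → ℕ → Ω → Fin m) (ζ : ℝ → ℕ → Ω → Bool) (f : ℝ → Fin m → ℝ)
    (ε : ℝ) (ω : Ω) : nuProc η ζ f ε 1 ω = reward (η ε) (f ε) (firstEvent (ζ ε) ω) ω := by
  rw [nuProc_eq_reward, one_mul, Nat.floor_natCast]

lemma exists_isRareEventFamily_of_condB [MeasurableSpace Ω] {ε₀ : ℝ} (hε₀ : 0 < ε₀)
    {η : ℝ → ℕ → Ω → Fin m} {ζ : ℝ → ℕ → Ω → Bool} {P : ℝ → Fin m → Measure Ω}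
    {R : ℝ → Fin m → Fin m → Bool → ℝ} {p : ℝ → Fin m → Fin m → ℝ} {π : ℝ → Fin m → ℝ}
    (hP : ∀ ε i, IsProbabilityMeasure (P ε i))
    (hmeas : ∀ ε n, Measurable (η ε n) ∧ Measurable (ζ ε n))
    (hlaw : ∀ ε ∈ Ioc 0 ε₀, ∀ n I Z, P ε (I 0) (pathCylinder (η ε) (ζ ε) n I Z)
      = ENNReal.ofReal (pathWeight (R ε) n I Z))
    (hp : ∀ ε ∈ Ioc 0 ε₀, ∀ i j, p ε i j = embedded (R ε) i j) (hB : CondB p)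
    (hπ : ∀ᶠ ε in 𝓝[>] 0, IsStationaryDist (p ε) (π ε))
    (hpos : ∀ ε ∈ Ioc 0 ε₀, ∃ i, 0 < rareP P ζ ε i)
    (hrare : ∀ i, Tendsto (fun ε => rareP P ζ ε i) (𝓝[>] 0) (𝓝 0)) :
    ∃ L a, IsRareEventFamily (𝓝[>] 0) η ζ P R π L a := by
  have hIoc : ∀ᶠ ε in 𝓝[>] 0, ε ∈ Ioc 0 ε₀ := Ioc_mem_nhdsGT hε₀
  have hreach (i j : Fin m) :
      Relation.ReflTransGen (IsUniformEdge (𝓝[>] 0) fun ε => embedded (R ε)) i j :=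
    Relation.ReflTransGen.mono (fun _ _ hedge => hedge.congr (hIoc.mono hp)) i j
      (hB.reflTransGen_isUniformEdge i j)
  refine exists_isRareEventFamily (eventually_isMarkovRenewal hP (fun ε n => (hmeas ε n).1)
    (fun ε n => (hmeas ε n).2) (hIoc.mono hlaw) hreach) hreach ?_ (hIoc.mono hpos) hrare
  filter_upwards [hIoc, hπ] with ε hε ⟨hnonneg, hsum, hstat⟩
  refine ⟨⟨hnonneg, hsum⟩, funext fun j => ?_⟩
  simp only [hstat j, hp ε hε, Matrix.vecMul, dotProduct]

end FinStates

/-- Lemma 8: under conditions A, B and H: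
(i) `f_ε⁻¹ ν_ε(1)` converges in distribution to an exponential random variable `ν₀` with
parameter 1;
(ii) condition I (`f_ε → f₀ ∈ [0,∞]`) is necessary and sufficient for convergence in
distribution (with possibly improper limit) of `ν_ε(1)`, the limit being distributed as
`f₀ ν₀`;
(iii) if `f₀ = ∞` then `ν_ε(t) → ∞` in probability for every `t > 0`. -/
theorem stmt15 {m : ℕ} (hm : 0 < m) (ε₀ : ℝ) (hε₀ : 0 < ε₀)
    {Ω : Type} [MeasurableSpace Ω]
    (η : ℝ → ℕ → Ω → Fin m) (ζ : ℝ → ℕ → Ω → Bool)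
    (Pstart : ℝ → Fin m → Measure Ω)
    (hprob : ∀ ε i, IsProbabilityMeasure (Pstart ε i))
    (hmeas : ∀ ε n, Measurable (η ε n) ∧ Measurable (ζ ε n))
    (R : ℝ → Fin m → Fin m → Bool → ℝ)
    (hMRP : ∀ ε ∈ Ioc (0:ℝ) ε₀, ∀ n : ℕ, ∀ I : ℕ → Fin m, ∀ Z : ℕ → Bool,
      Pstart ε (I 0) {ω | ∀ k ≤ n, (η ε k ω = I k ∧ (1 ≤ k → ζ ε k ω = Z k))}
        = ENNReal.ofReal (∏ k ∈ Finset.Icc 1 n, R ε (I (k - 1)) (I k) (Z k)))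
    (p : ℝ → Fin m → Fin m → ℝ)
    (hp : ∀ ε ∈ Ioc (0:ℝ) ε₀, ∀ i j, p ε i j = R ε i j false + R ε i j true)
    (hB : CondB p)
    (π : ℝ → Fin m → ℝ)
    (hπ : ∀ᶠ ε in 𝓝[>] (0:ℝ), IsStationaryDist (fun i j => p ε i j) (π ε))
    -- condition A
    (hA1 : ∀ ε ∈ Ioc (0:ℝ) ε₀, ∃ i, 0 < rareP Pstart ζ ε i)
    (hA2 : ∀ i, Tendsto (fun ε => rareP Pstart ζ ε i) (𝓝[>] (0:ℝ)) (𝓝 0))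
    -- arbitrary family of initial distributions
    (q : ℝ → Fin m → ℝ) (Pq : ℝ → Measure Ω)
    (hq : ∀ ε ∈ Ioc (0:ℝ) ε₀, (∀ i, 0 ≤ q ε i) ∧ ∑ i, q ε i = 1)
    (hmix : ∀ ε ∈ Ioc (0:ℝ) ε₀, Pq ε = ∑ i, ENNReal.ofReal (q ε i) • Pstart ε i)
    -- nonrandom nonnegative rewards f_{ε,i}
    (f : ℝ → Fin m → ℝ) (hf : ∀ ε ∈ Ioc (0:ℝ) ε₀, ∀ i, 0 ≤ f ε i)
    -- condition H
    (hH : ∀ᶠ ε in 𝓝[>] (0:ℝ), 0 < fBarNu Pstart ζ π f ε) :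
    -- (i) f_ε⁻¹ ν_ε(1) converges in distribution to an exponential law with parameter 1
    (∀ s > 0, Tendsto
      (fun ε => ∫ ω, Real.exp (-(s * (fBarNu Pstart ζ π f ε)⁻¹ * nuProc η ζ f ε 1 ω)) ∂(Pq ε))
      (𝓝[>] (0:ℝ)) (𝓝 (1 / (1 + s)))) ∧
    -- (ii) condition I is necessary and sufficient for convergence in distribution
    -- (with possibly improper limit) of ν_ε(1)
    ((∃ f₀ : ℝ≥0∞,
        Tendsto (fun ε => ENNReal.ofReal (fBarNu Pstart ζ π f ε)) (𝓝[>] (0:ℝ)) (𝓝 f₀)) ↔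
      (∃ L : ℝ → ℝ, ∀ s > 0,
        Tendsto (fun ε => ∫ ω, Real.exp (-(s * nuProc η ζ f ε 1 ω)) ∂(Pq ε))
          (𝓝[>] (0:ℝ)) (𝓝 (L s)))) ∧
    ∀ f₀ : ℝ≥0∞,
      Tendsto (fun ε => ENNReal.ofReal (fBarNu Pstart ζ π f ε)) (𝓝[>] (0:ℝ)) (𝓝 f₀) →
      -- in this case the limit is distributed as f₀ ν₀
      (∀ s > 0, Tendsto (fun ε => ∫ ω, Real.exp (-(s * nuProc η ζ f ε 1 ω)) ∂(Pq ε))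
        (𝓝[>] (0:ℝ)) (𝓝 (((1 + ENNReal.ofReal s * f₀)⁻¹).toReal))) ∧
      -- (iii) if f₀ = ∞ then ν_ε(t) → ∞ in probability for every t > 0
      (f₀ = ⊤ → ∀ t > (0:ℝ), ∀ c : ℝ,
        Tendsto (fun ε => (Pq ε {ω | nuProc η ζ f ε t ω ≤ c}).toReal)
          (𝓝[>] (0:ℝ)) (𝓝 0)) := by
  obtain ⟨K, a, h⟩ := exists_isRareEventFamily_of_condB hε₀ hprob hmeas hMRP hp hB hπ hA1 hA2
  have hIoc : ∀ᶠ ε in 𝓝[>] 0, ε ∈ Ioc 0 ε₀ := Ioc_mem_nhdsGT hε₀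
  have hQ : ∀ᶠ ε in 𝓝[>] 0, IsMixture (Pstart ε) (Pq ε) :=
    hIoc.mono fun ε hε => ⟨q ε, hq ε hε, hmix ε hε⟩
  have hf' : ∀ᶠ ε in 𝓝[>] 0, 0 ≤ f ε := hIoc.mono hf
  have hφ : ∀ᶠ ε in 𝓝[>] 0, 0 ≤ fBarNu Pstart ζ π f ε := hH.mono fun _ => le_of_lt
  simp only [nuProc_one]
  have hlim {f₀ : ℝ≥0∞}
      (hf₀ : Tendsto (fun ε => ENNReal.ofReal (fBarNu Pstart ζ π f ε)) (𝓝[>] 0) (𝓝 f₀))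
      (s : ℝ) (hs : s > 0) :=
    h.tendsto_integral_exp_of_tendsto_meanReward hQ hf' hφ hf₀ hs.le
  refine ⟨fun s hs => h.tendsto_integral_exp_inv_meanReward_mul hQ hf' hH hs.le,
    ⟨fun ⟨f₀, hf₀⟩ => ⟨_, hlim hf₀⟩, fun ⟨L, hL⟩ => ?_⟩, fun f₀ hf₀ => ⟨hlim hf₀, ?_⟩⟩
  · exact h.exists_tendsto_meanReward_of_tendsto_integral_exp hQ hf' hφ
      (by simpa only [one_mul] using hL 1 one_pos)
  · rintro rfl t ht x
    simp only [nuProc_eq_reward]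
    exact h.tendsto_measureReal_reward_floor hQ hf' (ENNReal.tendsto_ofReal_nhds_top.1 hf₀) ht x
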